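/- arXiv:1703.00442 — 6 statements merged into one kernel-verified Lean document; each statement's English description precedes it below -/
import Mathlib

section
/- Let 𝔓 be a (not necessarily commutative) ring with identity, let m ≥ 2 be an integer, set n = 2m, and let b, x ∈ 𝔓. Let A ∈ M_n(𝔓) be the matrix with A_{i,i} = b for 1 ≤ i ≤ n, A_{i+2,i} = 1 for 1 ≤ i ≤ n−2, A_{1,n} = x, and all other entries 0. Then there exist invertible matrices M, N ∈ M_n(𝔓) such that MAN is the matrix C with C_{i+2,i} = 1 for 1 ≤ i ≤ n−2, C_{1,n−1} = (−1)^{m−1} b^m, C_{2,n} = (−1)^{m−1} b^m, C_{1,n} = x, and all other entries 0. -/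
def mfun {P : Type*} [Ring P] (b : P) (i j : ℕ) : P :=
  if i ≤ j ∧ (j - i) % 2 = 0 then (-b) ^ ((j - i) / 2) else 0

lemma mfun_right {P : Type*} [Ring P] (b : P) (i j : ℕ) :
    mfun b i (j + 2) + mfun b i j * b = if i = j + 2 then 1 else 0 := by
  unfold mfun
  by_cases h : i ≤ j ∧ (j - i) % 2 = 0
  · have h1 : i ≤ j + 2 ∧ (j + 2 - i) % 2 = 0 := by omega
    have h2 : (j + 2 - i) / 2 = (j - i) / 2 + 1 := by omega
    rw [if_pos h, if_pos h1, h2, if_neg (by omega), pow_succ]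
    noncomm_ring
  · by_cases h3 : i = j + 2
    · subst h3
      simp
    · rw [if_neg h, if_neg (by omega), if_neg h3]
      simp

lemma mfun_left {P : Type*} [Ring P] (b : P) (i j : ℕ) :
    mfun b i j + b * mfun b (i + 2) j = if i = j then 1 else 0 := by
  unfold mfun
  by_cases h : i + 2 ≤ j ∧ (j - (i + 2)) % 2 = 0
  · have h1 : i ≤ j ∧ (j - i) % 2 = 0 := by omega
    have h2 : (j - i) / 2 = (j - (i + 2)) / 2 + 1 := by omega
    rw [if_pos h, if_pos h1, h2, if_neg (by omega), pow_succ']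
    noncomm_ring
  · by_cases h3 : i = j
    · subst h3
      simp
    · rw [if_neg h, if_neg (by omega), if_neg h3]
      simp

lemma mfun_gt {P : Type*} [Ring P] (b : P) (i j : ℕ) (h : j < i) : mfun b i j = 0 := by
  unfold mfun
  rw [if_neg (by omega)]

lemma mfun_small {P : Type*} [Ring P] (b : P) (i j : ℕ) (h : j < 2) :
    mfun b i j = if i = j then 1 else 0 := by
  unfold mfun
  by_cases h3 : i = j
  · subst h3
    simp
  · rw [if_neg (by omega), if_neg h3]

lemma sum_single_right {P : Type*} [Ring P] (n p : ℕ) (F : ℕ → P) (a : P) :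
    ∑ k : Fin n, F k * (if (k : ℕ) = p then a else 0) = if p < n then F p * a else 0 := by
  rw [Fin.sum_univ_eq_sum_range (fun k => F k * (if k = p then a else 0)) n]
  simp [Finset.sum_ite_eq']

lemma sum_single_left {P : Type*} [Ring P] (n p : ℕ) (F : ℕ → P) (a : P) :
    ∑ k : Fin n, (if (k : ℕ) = p then a else 0) * F k = if p < n then a * F p else 0 := by
  rw [Fin.sum_univ_eq_sum_range (fun k => (if k = p then a else 0) * F k) n]
  simp [Finset.sum_ite_eq']


/-- **Lemma 2.9.** Let `𝔓` be a (not necessarily commutative) ring with identity, `m ≥ 2`,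
`n = 2m`, and `b x ∈ 𝔓`.  The `n × n` matrix with `b` on the diagonal, `1` on the second
subdiagonal and `x` in the upper right corner is equivalent (via invertible matrices `M`, `N`)
to the matrix with `1` on the second subdiagonal, `(-1)^(m-1) * b^m` in positions `(1, n-1)`
and `(2, n)`, and `x` in position `(1, n)` (all indices written `1`-based; below matrices are
`0`-indexed). -/
theorem stmt0 {P : Type*} [Ring P] (m : ℕ) (hm : 2 ≤ m) (b x : P)
    (A C : Matrix (Fin (2 * m)) (Fin (2 * m)) P)
    (hA : ∀ i j : Fin (2 * m), A i j =
      if (i : ℕ) = (j : ℕ) then b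
      else if (i : ℕ) = (j : ℕ) + 2 then 1
      else if (i : ℕ) = 0 ∧ (j : ℕ) = 2 * m - 1 then x
      else 0)
    (hC : ∀ i j : Fin (2 * m), C i j =
      if (i : ℕ) = (j : ℕ) + 2 then 1
      else if (i : ℕ) = 0 ∧ (j : ℕ) = 2 * m - 2 then (-1 : P) ^ (m - 1) * b ^ m
      else if (i : ℕ) = 1 ∧ (j : ℕ) = 2 * m - 1 then (-1 : P) ^ (m - 1) * b ^ m
      else if (i : ℕ) = 0 ∧ (j : ℕ) = 2 * m - 1 then x
      else 0) :
    ∃ M N : Matrix (Fin (2 * m)) (Fin (2 * m)) P,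
      IsUnit M ∧ IsUnit N ∧ M * A * N = C := by
  let M : Matrix (Fin (2 * m)) (Fin (2 * m)) P := fun i j => mfun b i j
  let V : Matrix (Fin (2 * m)) (Fin (2 * m)) P := fun i j =>
    (if (j : ℕ) = (i : ℕ) then 1 else 0) + (if (j : ℕ) = (i : ℕ) + 2 then b else 0)
  let W : Matrix (Fin (2 * m)) (Fin (2 * m)) P := fun i j =>
    if 2 * m ≤ (j : ℕ) + 2 then mfun b ((i : ℕ) + 2) j * b else 0
  have hVM : V * M = 1 := by
    ext i j
    rw [Matrix.mul_apply, Matrix.one_apply]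
    simp only [V, M, add_mul, Finset.sum_add_distrib]
    rw [sum_single_left (2 * m) i (fun k => mfun b k j) 1,
      sum_single_left (2 * m) (i + 2) (fun k => mfun b k j) b]
    have hl := mfun_left b i j
    have hi := i.2
    have hj := j.2
    simp only [Fin.ext_iff]
    rw [if_pos hi, one_mul, ← hl]
    by_cases h : (i : ℕ) + 2 < 2 * m
    · rw [if_pos h]
    · rw [if_neg h, mfun_gt b (i + 2) j (by omega), mul_zero]
  have hMV : M * V = 1 := by
    ext i j
    have hi := i.2
    have hj := j.2
    rw [Matrix.mul_apply, Matrix.one_apply]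
    have e : ∀ k : Fin (2 * m), M i k * V k j =
        mfun b i k * (if (k : ℕ) = j then 1 else 0) +
        (if 2 ≤ (j : ℕ) then mfun b i k * (if (k : ℕ) = (j : ℕ) - 2 then b else 0) else 0) := by
      intro k
      simp only [M, V, mul_add]
      congr 1
      · simp only [eq_comm]
      · by_cases h : (j : ℕ) = k + 2
        · rw [if_pos h, if_pos (by omega), if_pos (by omega)]
        · rw [if_neg h]
          by_cases h2 : 2 ≤ (j : ℕ)
          · rw [if_pos h2, if_neg (by omega)]
          · rw [if_neg h2, mul_zero]
    rw [Finset.sum_congr rfl (fun k _ => e k), Finset.sum_add_distrib,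
      sum_single_right (2 * m) j (fun k => mfun b i k) 1, if_pos hj, mul_one]
    simp only [Fin.ext_iff]
    by_cases h2 : 2 ≤ (j : ℕ)
    · simp only [if_pos h2]
      rw [sum_single_right (2 * m) (j - 2) (fun k => mfun b i k) b, if_pos (by omega)]
      have hr := mfun_right b i (j - 2)
      rw [Nat.sub_add_cancel h2] at hr
      exact hr
    · simp only [if_neg h2]
      rw [Finset.sum_const_zero, add_zero, mfun_small b i j (by omega)]
  have hWW : W * W = 0 := by
    ext i j
    rw [Matrix.mul_apply, Matrix.zero_apply]
    refine Finset.sum_eq_zero fun k _ => ?_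
    have hj := j.2
    simp only [W]
    by_cases h : 2 * m ≤ (k : ℕ) + 2
    · rw [mfun_gt b (k + 2) j (by omega)]
      simp
    · rw [if_neg h, zero_mul]
  have h1 : (1 + W) * (1 - W) = 1 := by
    have : (1 + W) * (1 - W) = 1 - W * W := by noncomm_ring
    rw [this, hWW, sub_zero]
  have h2 : (1 - W) * (1 + W) = 1 := by
    have : (1 - W) * (1 + W) = 1 - W * W := by noncomm_ring
    rw [this, hWW, sub_zero]
  have hCW : ∀ i j : Fin (2 * m), (C * W) i j =
      if 2 ≤ (i : ℕ) ∧ 2 * m ≤ (j : ℕ) + 2 then mfun b i j * b else 0 := by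
    intro i j
    have hi := i.2
    have hj := j.2
    rw [Matrix.mul_apply]
    have e : ∀ k : Fin (2 * m), C i k * W k j =
        (if 2 ≤ (i : ℕ) ∧ 2 * m ≤ (j : ℕ) + 2 then
          (if (k : ℕ) = (i : ℕ) - 2 then 1 else 0) * (mfun b (k + 2) j * b) else 0) := by
      intro k
      have hk := k.2
      simp only [W]
      by_cases hjm : 2 * m ≤ (j : ℕ) + 2
      · by_cases hk2 : 2 * m ≤ (k : ℕ) + 2
        · rw [mfun_gt b (k + 2) j (by omega)]
          simp
        · rw [hC]
          by_cases hik : (i : ℕ) = k + 2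
          · rw [if_pos hik, if_pos hjm, if_pos (by omega), if_pos (by omega)]
          · rw [if_neg hik, if_neg (by omega), if_neg (by omega), if_neg (by omega), zero_mul]
            by_cases hi2 : 2 ≤ (i : ℕ)
            · rw [if_pos ⟨hi2, hjm⟩, if_neg (by omega), zero_mul]
            · rw [if_neg (by omega)]
      · rw [if_neg hjm, if_neg (by omega), mul_zero]
    rw [Finset.sum_congr rfl (fun k _ => e k)]
    by_cases hc : 2 ≤ (i : ℕ) ∧ 2 * m ≤ (j : ℕ) + 2
    · simp only [if_pos hc]
      rw [sum_single_left (2 * m) (i - 2) (fun k => mfun b (k + 2) j * b) 1,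
        if_pos (by omega), one_mul, Nat.sub_add_cancel hc.1]
    · simp only [if_neg hc, Finset.sum_const_zero]
  have hMA : ∀ i j : Fin (2 * m), (M * A) i j = mfun b i j * b +
      (if (j : ℕ) + 2 < 2 * m then mfun b i (j + 2) else 0) +
      (if (j : ℕ) = 2 * m - 1 then mfun b i 0 * x else 0) := by
    intro i j
    have hi := i.2
    have hj := j.2
    rw [Matrix.mul_apply]
    have e : ∀ k : Fin (2 * m), M i k * A k j =
        mfun b i k * (if (k : ℕ) = j then b else 0) +
        mfun b i k * (if (k : ℕ) = (j : ℕ) + 2 then 1 else 0) +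
        mfun b i k * (if (k : ℕ) = 0 then (if (j : ℕ) = 2 * m - 1 then x else 0) else 0) := by
      intro k
      rw [hA, ← mul_add, ← mul_add]
      simp only [M]
      congr 1
      by_cases c1 : (k : ℕ) = j
      · rw [if_pos c1, if_pos c1, if_neg (by omega)]
        by_cases c2 : (k : ℕ) = 0
        · rw [if_pos c2, if_neg (by omega)]
          simp
        · rw [if_neg c2]
          simp
      · rw [if_neg c1, if_neg c1]
        by_cases c2 : (k : ℕ) = j + 2
        · rw [if_pos c2, if_pos c2, if_neg (by omega)]
          simp
        · rw [if_neg c2, if_neg c2, ite_and]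
          simp
    rw [Finset.sum_congr rfl (fun k _ => e k), Finset.sum_add_distrib, Finset.sum_add_distrib,
      sum_single_right (2 * m) j (fun k => mfun b i k),
      sum_single_right (2 * m) (j + 2) (fun k => mfun b i k),
      sum_single_right (2 * m) 0 (fun k => mfun b i k), if_pos hj,
      if_pos (show 0 < 2 * m by omega)]
    simp only [mul_one, mul_ite, mul_zero]
  have hpow : (-b) ^ (m - 1) * b = (-1 : P) ^ (m - 1) * b ^ m := by
    obtain ⟨k, rfl⟩ : ∃ k, m = k + 1 := ⟨m - 1, by omega⟩
    rw [Nat.add_sub_cancel, neg_pow, mul_assoc, pow_succ b]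
  have key : M * A = C * (1 + W) := by
    rw [mul_add, mul_one]
    ext i j
    rw [Matrix.add_apply, hCW, hMA, hC]
    have hi := i.2
    have hj := j.2
    by_cases hjm : (j : ℕ) + 2 < 2 * m
    · have hr := mfun_right b i j
      rw [if_pos hjm, if_neg (by omega), add_zero, add_comm, hr]
      by_cases c : (i : ℕ) = j + 2
      · rw [if_pos c, if_pos c, if_neg (by omega), add_zero]
      · rw [if_neg c, if_neg c, if_neg (by omega), if_neg (by omega), if_neg (by omega),
          if_neg (by omega), add_zero]
    · rw [if_neg hjm, if_neg (show ¬ (i : ℕ) = j + 2 by omega), add_zero]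
      by_cases hi2 : 2 ≤ (i : ℕ)
      · rw [mfun_gt b i 0 (by omega), if_neg (show ¬ ((i : ℕ) = 0 ∧ (j : ℕ) = 2 * m - 2) by omega),
          if_neg (show ¬ ((i : ℕ) = 1 ∧ (j : ℕ) = 2 * m - 1) by omega),
          if_neg (show ¬ ((i : ℕ) = 0 ∧ (j : ℕ) = 2 * m - 1) by omega),
          if_pos (show 2 ≤ (i : ℕ) ∧ 2 * m ≤ (j : ℕ) + 2 by omega)]
        simp
      · rw [if_neg (show ¬ (2 ≤ (i : ℕ) ∧ 2 * m ≤ (j : ℕ) + 2) by omega), add_zero,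
          mfun_small b i 0 (by omega), ← hpow]
        unfold mfun
        have hi' : (i : ℕ) = 0 ∨ (i : ℕ) = 1 := by omega
        have hj' : (j : ℕ) = 2 * m - 2 ∨ (j : ℕ) = 2 * m - 1 := by omega
        have d1 : (2 * m - 2 - 0) / 2 = m - 1 := by omega
        have d2 : (2 * m - 1 - 1) / 2 = m - 1 := by omega
        have n1 : ¬ (2 * m - 2 = 2 * m - 1) := by omega
        have n2 : ¬ (2 * m - 1 = 2 * m - 2) := by omega
        rcases hi' with hi' | hi' <;> rcases hj' with hj' | hj' <;> rw [hi', hj']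
        · rw [if_pos (by omega), if_neg n1, if_pos (by omega), d1, add_zero]
        · rw [if_neg (by omega), if_neg (show ¬ ((0 : ℕ) = 0 ∧ 2 * m - 1 = 2 * m - 2) by omega)]
          simp
        · rw [if_neg (by omega), if_neg n1, if_neg (by omega), if_neg (by omega),
            if_neg (by omega)]
          simp
        · rw [if_pos (by omega), if_neg (show ¬ ((1 : ℕ) = 0 ∧ 2 * m - 1 = 2 * m - 2) by omega), d2]
          simp
  refine ⟨M, 1 - W, ⟨⟨M, V, hMV, hVM⟩, rfl⟩, ⟨⟨1 - W, 1 + W, h2, h1⟩, rfl⟩, ?_⟩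
  rw [key, mul_assoc, h1, mul_one]
end

section
/- Let 𝔓 be a (not necessarily commutative) ring with identity, let m ≥ 2 be an integer, set n = 2m+1, and let b, x, y ∈ 𝔓. Let A ∈ M_n(𝔓) be the matrix with A_{i,i} = b for 1 ≤ i ≤ n, A_{i+2,i} = 1 for 1 ≤ i ≤ n−2, A_{1,n−1} = x, A_{2,n} = y, and all other entries 0. Then there exist invertible matrices M, N ∈ M_n(𝔓) such that MAN is the matrix C with C_{i+2,i} = 1 for 1 ≤ i ≤ n−2, C_{1,n−1} = x, C_{1,n} = (−1)^m b^{m+1}, C_{2,n−1} = (−1)^{m−1} b^m, C_{2,n} = y, and all other entries 0. -/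
/-- The shift matrix with ones in positions `(i, i + 2)`. -/
def shT (P : Type*) [Ring P] (n : ℕ) : Matrix (Fin n) (Fin n) P :=
  fun i j => if (j : ℕ) = (i : ℕ) + 2 then 1 else 0

theorem shT_mul {P : Type*} [Ring P] (n : ℕ) (Y : Matrix (Fin n) (Fin n) P) (i j : Fin n) :
    (shT P n * Y) i j = if h : (i : ℕ) + 2 < n then Y ⟨i + 2, h⟩ j else 0 := by
  rw [Matrix.mul_apply]
  split_ifs with h
  · rw [Finset.sum_eq_single (⟨i + 2, h⟩ : Fin n)]
    · simp [shT]
    · intro k _ hk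
      have : (k : ℕ) ≠ i + 2 := fun e => hk (Fin.ext e)
      simp [shT, this]
    · simp
  · apply Finset.sum_eq_zero
    intro k _
    have : (k : ℕ) ≠ i + 2 := by have := k.2; omega
    simp [shT, this]

theorem mul_shT {P : Type*} [Ring P] (n : ℕ) (Y : Matrix (Fin n) (Fin n) P) (i j : Fin n) :
    (Y * shT P n) i j = if 2 ≤ (j : ℕ) then Y i ⟨j - 2, by have := j.2; omega⟩ else 0 := by
  rw [Matrix.mul_apply]
  split_ifs with h
  · rw [Finset.sum_eq_single (⟨j - 2, by have := j.2; omega⟩ : Fin n)]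
    · have : (j : ℕ) = j - 2 + 2 := by omega
      simp [shT, ← this]
    · intro k _ hk
      have : (j : ℕ) ≠ k + 2 := fun e => hk (Fin.ext (by simp; omega))
      simp [shT, this]
    · simp
  · apply Finset.sum_eq_zero
    intro k _
    have : (j : ℕ) ≠ k + 2 := by omega
    simp [shT, this]

/-- Entries of the inverse of `1 + b T`. -/
def geo {P : Type*} [Ring P] (b : P) (i j : ℕ) : P :=
  if i ≤ j ∧ (j - i) % 2 = 0 then (-b) ^ ((j - i) / 2) else 0

theorem geo_self {P : Type*} [Ring P] (b : P) (i : ℕ) : geo b i i = 1 := by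
  simp [geo]

theorem geo_gt {P : Type*} [Ring P] (b : P) (i j : ℕ) (h : j < i) : geo b i j = 0 := by
  have : ¬ (i ≤ j ∧ (j - i) % 2 = 0) := by omega
  rw [geo, if_neg this]

theorem geo_succ {P : Type*} [Ring P] (b : P) (i : ℕ) : geo b i (i + 1) = 0 := by
  have : ¬ (i ≤ i + 1 ∧ (i + 1 - i) % 2 = 0) := by omega
  rw [geo, if_neg this]

theorem geo_shift {P : Type*} [Ring P] (b : P) (i j : ℕ) : geo b (i + 2) (j + 2) = geo b i j := by
  have e : j + 2 - (i + 2) = j - i := by omega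
  simp [geo, e]

theorem geo_left {P : Type*} [Ring P] (b : P) (i j : ℕ) (h : i ≠ j) :
    geo b i j + b * geo b (i + 2) j = 0 := by
  unfold geo
  by_cases h1 : i ≤ j ∧ (j - i) % 2 = 0
  · have h2 : i + 2 ≤ j ∧ (j - (i + 2)) % 2 = 0 := by omega
    have e : (j - i) / 2 = (j - (i + 2)) / 2 + 1 := by omega
    rw [if_pos h1, if_pos h2, e, pow_succ']
    simp
  · have h2 : ¬ (i + 2 ≤ j ∧ (j - (i + 2)) % 2 = 0) := by omega
    rw [if_neg h1, if_neg h2]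
    simp

theorem geo_comm {P : Type*} [Ring P] (b : P) (i j : ℕ) : b * geo b i j = geo b i j * b := by
  unfold geo
  split_ifs
  · exact ((Commute.refl b).neg_right.pow_right _).eq
  · simp

/-- **Corollary 2.14.** Let `𝔓` be a (not necessarily commutative) ring with identity,
`m ≥ 2`, `n = 2m + 1`, and `b x y ∈ 𝔓`.  The `n × n` matrix with `b` on the diagonal, `1` on
the second subdiagonal, `x` in position `(1, n-1)` and `y` in position `(2, n)` is equivalent
(via invertible matrices `M`, `N`) to the matrix with `1` on the second subdiagonal,
`x` in position `(1, n-1)`, `(-1)^m * b^(m+1)` in position `(1, n)`, `(-1)^(m-1) * b^m` in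
position `(2, n-1)` and `y` in position `(2, n)` (indices written `1`-based; below matrices
are `0`-indexed, with `n = 2m + 1`, so `n - 1 = 2m` and `n - 2 = 2m - 1` as `0`-based
indices of the last two columns). -/
theorem stmt1 {P : Type*} [Ring P] (m : ℕ) (hm : 2 ≤ m) (b x y : P)
    (A C : Matrix (Fin (2 * m + 1)) (Fin (2 * m + 1)) P)
    (hA : ∀ i j : Fin (2 * m + 1), A i j =
      if (i : ℕ) = (j : ℕ) then b
      else if (i : ℕ) = (j : ℕ) + 2 then 1
      else if (i : ℕ) = 0 ∧ (j : ℕ) = 2 * m - 1 then x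
      else if (i : ℕ) = 1 ∧ (j : ℕ) = 2 * m then y
      else 0)
    (hC : ∀ i j : Fin (2 * m + 1), C i j =
      if (i : ℕ) = (j : ℕ) + 2 then 1
      else if (i : ℕ) = 0 ∧ (j : ℕ) = 2 * m - 1 then x
      else if (i : ℕ) = 0 ∧ (j : ℕ) = 2 * m then (-1 : P) ^ m * b ^ (m + 1)
      else if (i : ℕ) = 1 ∧ (j : ℕ) = 2 * m - 1 then (-1 : P) ^ (m - 1) * b ^ m
      else if (i : ℕ) = 1 ∧ (j : ℕ) = 2 * m then y
      else 0) :
    ∃ M N : Matrix (Fin (2 * m + 1)) (Fin (2 * m + 1)) P,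
      IsUnit M ∧ IsUnit N ∧ M * A * N = C := by
  classical
  obtain ⟨n, hn⟩ : ∃ n, 2 * m + 1 = n := ⟨_, rfl⟩
  revert A C
  rw [hn]
  intro A C hA hC
  set T := shT P n with hT
  let B : Matrix (Fin n) (Fin n) P := Matrix.diagonal fun _ => b
  let G : Matrix (Fin n) (Fin n) P := fun i j => geo b i j
  let D : Matrix (Fin n) (Fin n) P := fun i j => if 2 * m - 1 ≤ (j : ℕ) then b * geo b i j else 0
  let E : Matrix (Fin n) (Fin n) P := fun i j =>
    (if (i : ℕ) = (j : ℕ) + 2 then 1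
      else if (i : ℕ) = 0 ∧ (j : ℕ) = 2 * m - 1 then x
      else if (i : ℕ) = 1 ∧ (j : ℕ) = 2 * m then y
      else 0) + D i j
  have hBT : B * T = T * B := by
    ext i j
    simp [B, T, Matrix.diagonal_mul, Matrix.mul_diagonal, shT]
  have hUG : (1 + B * T) * G = 1 := by
    ext i j
    rw [add_mul, one_mul, Matrix.mul_assoc, Matrix.add_apply, Matrix.diagonal_mul, hT, shT_mul,
      Matrix.one_apply]
    have e : (if h : (i : ℕ) + 2 < n then G ⟨i + 2, h⟩ j else 0) = geo b (i + 2) j := by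
      split_ifs with h
      · rfl
      · rw [geo_gt]; have := j.2; omega
    rw [e]
    by_cases h : i = j
    · subst h
      simp [G, geo_self, geo_gt]
    · rw [if_neg h]
      exact geo_left b i j (fun e => h (Fin.ext e))
  have hGU : G * (1 + B * T) = 1 := by
    ext i j
    rw [mul_add, mul_one, hBT, ← Matrix.mul_assoc, Matrix.add_apply, Matrix.mul_diagonal, hT,
      mul_shT, Matrix.one_apply]
    by_cases h2 : 2 ≤ (j : ℕ)
    · rw [if_pos h2]
      change geo b i j + geo b i (j - 2) * b = _
      rw [← geo_comm, ← geo_shift b i (j - 2), show (j : ℕ) - 2 + 2 = j by omega]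
      by_cases h : i = j
      · subst h
        simp [geo_self, geo_gt]
      · rw [if_neg h]
        exact geo_left b i j (fun e => h (Fin.ext e))
    · rw [if_neg h2, zero_mul, add_zero]
      change geo b i j = _
      by_cases h : i = j
      · subst h
        simp [geo_self]
      · rw [if_neg h]
        have h' : (i : ℕ) ≠ j := fun e => h (Fin.ext e)
        rcases Nat.lt_or_gt_of_ne h' with h3 | h3
        · have h4 : (i : ℕ) = 0 := by omega
          have h5 : (j : ℕ) = 0 + 1 := by omega
          rw [h4, h5, geo_succ]
        · exact geo_gt b _ _ h3
  have hUE : (1 + B * T) * E = A := by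
    ext i j
    rw [add_mul, one_mul, Matrix.mul_assoc, Matrix.add_apply, Matrix.diagonal_mul, hT, shT_mul, hA]
    have hi := i.2
    have hj := j.2
    have e : (if h : (i : ℕ) + 2 < n then E ⟨i + 2, h⟩ j else 0) =
        (if (i : ℕ) = j ∧ (i : ℕ) + 2 < n then 1 else 0) +
          (if 2 * m - 1 ≤ (j : ℕ) then b * geo b (i + 2) j else 0) := by
      by_cases h : (i : ℕ) + 2 < n
      · rw [dif_pos h]
        simp [E, D, h]
      · rw [dif_neg h, if_neg (fun hh => h hh.2), geo_gt b _ _ (by omega)]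
        simp
    rw [e]
    by_cases hj2 : 2 * m - 1 ≤ (j : ℕ)
    · have hne : (i : ℕ) ≠ j + 2 := by omega
      by_cases hij : (i : ℕ) = j
      · have h1 : ¬ ((i : ℕ) + 2 < n) := by omega
        have h2 : ¬ ((j : ℕ) + 2 < n) := by omega
        have h3 : ¬ ((j : ℕ) = 0) := by omega
        have h4 : ¬ ((j : ℕ) = 1) := by omega
        simp [E, D, hij, hj2, h2, h3, h4, geo_self, geo_gt]
        intro hh
        omega
      · have := congrArg (b * ·) (geo_left b i j hij)
        simp only [mul_add, mul_zero] at this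
        simp only [E, D, if_pos hj2, hij, false_and, if_false, zero_add, if_neg hne]
        rw [add_assoc, this, add_zero]
    · have h1 : ¬ ((j : ℕ) = 2 * m - 1) := by omega
      have h2 : ¬ ((j : ℕ) = 2 * m) := by omega
      by_cases hij : (i : ℕ) = j
      · have h3 : ((j : ℕ) + 2 < n) := by omega
        simp [E, D, hj2, h1, h2, hij, h3]
        intro hh
        omega
      · simp [E, D, hj2, h1, h2, hij]
        intro hh
        omega
  have hDT : D * T = 0 := by
    ext i j
    have hj := j.2
    rw [hT, mul_shT]
    split_ifs with h
    · have : ¬ (2 * m - 1 ≤ (j : ℕ) - 2) := by omega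
      simp only [D, if_neg this, Matrix.zero_apply]
    · rfl
  have hET : E * T = Matrix.diagonal fun i : Fin n => if 2 ≤ (i : ℕ) then (1 : P) else 0 := by
    ext i j
    have hj := j.2
    rw [hT, mul_shT, Matrix.diagonal_apply]
    by_cases h : 2 ≤ (j : ℕ)
    · have h1 : ¬ (2 * m ≤ (j : ℕ) - 2 + 1) := by omega
      have h2 : ¬ ((j : ℕ) - 2 = 2 * m - 1) := by omega
      have h3 : ¬ ((j : ℕ) - 2 = 2 * m) := by omega
      have h4 : (j : ℕ) - 2 + 2 = j := by omega
      by_cases hij : i = j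
      · subst hij
        simp [E, D, h, h1, h4]
      · have h5 : (i : ℕ) ≠ j := fun e => hij (Fin.ext e)
        simp [E, D, h, h1, h2, h3, h4, h5, hij]
    · by_cases hij : i = j
      · subst hij
        simp [h]
      · simp [h, hij]
  have hZ : (T * D) * (T * D) = 0 := by
    rw [Matrix.mul_assoc, ← Matrix.mul_assoc D, hDT]
    simp
  refine ⟨G, 1 - T * D, ?_, ?_, ?_⟩
  · exact ⟨⟨G, 1 + B * T, hGU, hUG⟩, rfl⟩
  · refine ⟨⟨1 - T * D, 1 + T * D, ?_, ?_⟩, rfl⟩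
    · rw [sub_mul, one_mul, mul_add, mul_one, hZ]; abel
    · rw [add_mul, one_mul, mul_sub, mul_one, hZ]; abel
  · rw [← hUE, ← Matrix.mul_assoc, hGU, one_mul, mul_sub, mul_one, ← Matrix.mul_assoc, hET]
    ext i j
    have hi := i.2
    have hj := j.2
    rw [Matrix.sub_apply, Matrix.diagonal_mul, hC]
    by_cases h : 2 ≤ (i : ℕ)
    · have h1 : (i : ℕ) ≠ 0 := by omega
      have h2 : (i : ℕ) ≠ 1 := by omega
      simp [E, h, h1, h2]
    · have h1 : (i : ℕ) ≠ j + 2 := by omega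
      simp only [E, D, if_neg h, if_neg h1, zero_mul, sub_zero]
      by_cases hj2 : 2 * m - 1 ≤ (j : ℕ)
      · have hi' : (i : ℕ) = 0 ∨ (i : ℕ) = 1 := by omega
        have hj' : (j : ℕ) = 2 * m - 1 ∨ (j : ℕ) = 2 * m := by omega
        have a1 : ¬ (2 * m = 2 * m - 1) := by omega
        have a2 : ¬ (2 * m - 1 = 2 * m) := by omega
        have g1 : geo b 0 (2 * m - 1) = 0 := by
          rw [geo, if_neg]; omega
        have g2 : geo b 1 (2 * m) = 0 := by
          rw [geo, if_neg]; omega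
        have g3 : b * geo b 0 (2 * m) = (-1 : P) ^ m * b ^ (m + 1) := by
          rw [geo, if_pos (by omega), show (2 * m - 0) / 2 = m by omega, neg_pow, pow_succ',
            ← mul_assoc, ← mul_assoc, ((Commute.neg_one_right b).pow_right m).eq]
        have g4 : b * geo b 1 (2 * m - 1) = (-1 : P) ^ (m - 1) * b ^ m := by
          rw [geo, if_pos (by omega), show (2 * m - 1 - 1) / 2 = m - 1 by omega, neg_pow,
            ← mul_assoc, ((Commute.neg_one_right b).pow_right (m - 1)).eq, mul_assoc,
            ← pow_succ', show m - 1 + 1 = m by omega]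
        rcases hi' with hi' | hi' <;> rcases hj' with hj' | hj' <;>
          simp [hi', hj', a1, a2, g1, g2, g3, g4]
      · have b1 : ¬ ((j : ℕ) = 2 * m - 1) := by omega
        have b2 : ¬ ((j : ℕ) = 2 * m) := by omega
        simp [hj2, b1, b2]
end

section
/- Let 𝔓 be a (not necessarily commutative) ring with identity, let n ≥ 2 be an integer and b ∈ 𝔓. Let A ∈ M_n(𝔓) be the matrix with A_{i,i} = b for 1 ≤ i ≤ n, A_{i+1,i} = 1 for 1 ≤ i ≤ n−1, and all other entries 0. Then there exist upper triangular matrices B, C ∈ M_n(𝔓), each having every diagonal entry equal to 1, such that BAC is the matrix with (i+1,i)-entry 1 for 1 ≤ i ≤ n−1, (1,n)-entry (−1)^{n+1} b^n, and all other entries 0. -/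
/-- **Lemma 2.16.** Let `𝔓` be a (not necessarily commutative) ring with identity, `n ≥ 2`
and `b ∈ 𝔓`.  For the `n × n` matrix `A` with `b` on the diagonal and `1` on the first
subdiagonal, there are upper triangular matrices `B`, `C` with all diagonal entries `1`
such that `B * A * C` has `1` on the first subdiagonal, `(-1)^(n+1) * b^n` in the upper
right corner, and `0` elsewhere (matrices below are `0`-indexed). -/
theorem stmt2 {P : Type*} [Ring P] (n : ℕ) (hn : 2 ≤ n) (b : P)
    (A : Matrix (Fin n) (Fin n) P)
    (hA : ∀ i j : Fin n, A i j =
      if (i : ℕ) = (j : ℕ) then b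
      else if (i : ℕ) = (j : ℕ) + 1 then 1
      else 0) :
    ∃ B C : Matrix (Fin n) (Fin n) P,
      (∀ i : Fin n, B i i = 1) ∧ (∀ i j : Fin n, (j : ℕ) < (i : ℕ) → B i j = 0) ∧
      (∀ i : Fin n, C i i = 1) ∧ (∀ i j : Fin n, (j : ℕ) < (i : ℕ) → C i j = 0) ∧
      ∀ i j : Fin n, (B * A * C) i j =
        if (i : ℕ) = (j : ℕ) + 1 then 1
        else if (i : ℕ) = 0 ∧ (j : ℕ) = n - 1 then (-1 : P) ^ (n + 1) * b ^ n
        else 0 := by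
  obtain ⟨m, rfl⟩ : ∃ m, n = m + 1 := ⟨n - 1, by omega⟩
  let B : Matrix (Fin (m+1)) (Fin (m+1)) P := fun i j =>
    if (i : ℕ) = 0 then (-b) ^ (j : ℕ) else if i = j then 1 else 0
  let C : Matrix (Fin (m+1)) (Fin (m+1)) P := fun i j =>
    if (i : ℕ) ≤ (j : ℕ) then (-b) ^ ((j : ℕ) - (i : ℕ)) else 0
  let M : Matrix (Fin (m+1)) (Fin (m+1)) P := fun i j =>
    if (i : ℕ) = 0 then (if j = Fin.last m then (-b) ^ m * b else 0) else A i j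
  have hBA : B * A = M := by
    ext i j
    rw [Matrix.mul_apply]
    by_cases hi : (i : ℕ) = 0
    · simp only [B, M, hi, if_true]
      by_cases hj : j = Fin.last m
      · rw [Finset.sum_eq_single j]
        · simp [hA, hj]
        · intro k _ hk
          have h1 : (k : ℕ) ≠ j := fun h => hk (Fin.ext h)
          have h2 : (k : ℕ) ≠ j + 1 := by subst hj; simp; omega
          simp [hA, h1, h2]
        · simp
      · have hj' : (j : ℕ) ≠ m := fun h => hj (Fin.ext h)
        have hj2 : (j : ℕ) + 1 < m + 1 := by omega
        rw [if_neg hj, Finset.sum_eq_add j ⟨j + 1, hj2⟩]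
        · simp [hA, pow_succ]
        · intro h
          have := congrArg Fin.val h
          simp at this
        · rintro k _ ⟨hk, hk2⟩
          have h1 : (k : ℕ) ≠ j := fun h => hk (Fin.ext h)
          have h2 : (k : ℕ) ≠ j + 1 := fun h => hk2 (Fin.ext h)
          simp [hA, h1, h2]
        · simp
        · simp
    · simp only [B, M, if_neg hi]
      simp
  refine ⟨B, C, ?_, ?_, ?_, ?_, ?_⟩
  · intro i
    by_cases hi : (i : ℕ) = 0
    · simp only [B, hi, if_true, pow_zero]
    · simp only [B, if_neg hi, if_true]
  · intro i j h
    have hi : (i : ℕ) ≠ 0 := by omega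
    have hij : i ≠ j := by rintro rfl; omega
    simp only [B, if_neg hi, if_neg hij]
  · intro i
    simp [C]
  · intro i j h
    simp only [C, if_neg (not_le.mpr h)]
  · intro i j
    rw [hBA, Matrix.mul_apply]
    by_cases hi : (i : ℕ) = 0
    · simp only [M, hi, if_true]
      rw [Finset.sum_eq_single (Fin.last m)]
      · by_cases hj : (j : ℕ) = m
        · have : (-b) ^ m * b = (-1) ^ (m + 1 + 1) * b ^ (m + 1) := by
            rw [neg_pow b m, pow_succ (-1 : P) (m + 1), pow_succ (-1 : P) m, pow_succ b m]
            simp [mul_assoc]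
          have hj2 : j = Fin.last m := Fin.ext hj
          subst hj2
          simp [C, this]
        · have : ¬ m ≤ (j : ℕ) := by omega
          have hj2 : j ≠ Fin.last m := fun h => hj (by simp [h])
          simp [C, hj, hj2]
      · intro k _ hk
        simp [hk]
      · simp
    · simp only [M, hi, if_false, false_and]
      have hp : (i : ℕ) - 1 < m + 1 := by omega
      rw [Finset.sum_eq_add i ⟨i - 1, hp⟩]
      · have e1 : (i : ℕ) ≠ i - 1 := by omega
        have e2 : (i : ℕ) = i - 1 + 1 := by omega
        have a1 : A i i = b := by simp [hA]
        have a2 : A i ⟨i - 1, hp⟩ = 1 := by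
          rw [hA]; simp only [if_neg e1, if_pos e2]
        rw [a1, a2]
        simp only [C, one_mul]
        rcases lt_trichotomy (i : ℕ) (j + 1) with h | h | h
        · have h1 : (i : ℕ) ≤ j := by omega
          have h2 : (i : ℕ) - 1 ≤ j := by omega
          have h3 : (j : ℕ) - (i - 1) = (j - i) + 1 := by omega
          rw [if_pos h1, if_pos h2, if_neg (by omega), h3, pow_succ']
          simp
        · simp [h]
        · rw [if_neg (by omega), if_neg (by omega), if_neg (by omega)]
          simp
      · intro h
        have := congrArg Fin.val h
        simp at this
        omega
      · rintro k _ ⟨hk, hk2⟩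
        have h1 : (i : ℕ) ≠ k := fun h => hk (Fin.ext h.symm)
        have h2 : (i : ℕ) ≠ k + 1 := fun h => hk2 (Fin.ext (by simp; omega))
        simp [hA, h1, h2]
      · simp
      · simp
end

section
/- Let 𝔓 be a (not necessarily commutative) ring with identity, let n ≥ 3 and 1 ≤ k ≤ n−1 be integers, set m = n−k, let b ∈ 𝔓 and let u, v be central elements of 𝔓. Let B_k ∈ M_n(𝔓) be the matrix with (i,i)-entry b for 1 ≤ i ≤ n, (i+1,i)-entry 1 for every i ∈ {1,…,n−1} with i ≠ k, (k+1,k)-entry u, (1,n)-entry v, and all other entries 0. Then B_k is equivalent to the block diagonal matrix I_{n−2} ⊕ [[(−1)^{k+1} b^k, v],[u, (−1)^{m+1} b^m]], where I_{n−2} is the identity matrix of size n−2. -/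
open Matrix in
theorem aux_perm_isUnit {P : Type*} [Ring P] {n : ℕ} (e : Fin n ≃ Fin n) :
    IsUnit ((1 : Matrix (Fin n) (Fin n) P).submatrix id e) := by
  refine ⟨⟨(1 : Matrix (Fin n) (Fin n) P).submatrix id e,
    (1 : Matrix (Fin n) (Fin n) P).submatrix e id, ?_, ?_⟩, rfl⟩
  · rw [Matrix.submatrix_mul_equiv]; simp
  · have := Matrix.submatrix_mul_equiv (1 : Matrix (Fin n) (Fin n) P)
      (1 : Matrix (Fin n) (Fin n) P) e (Equiv.refl (Fin n)) e
    simpa using this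

theorem aux_upper_nil {P : Type*} [Ring P] {n : ℕ} (N : Matrix (Fin n) (Fin n) P)
    (h : ∀ i j : Fin n, (j : ℕ) ≤ i → N i j = 0) : IsNilpotent N := by
  have key : ∀ r : ℕ, ∀ i j : Fin n, (j : ℕ) < i + r → (N ^ r) i j = 0 := by
    intro r
    induction r with
    | zero =>
      intro i j hij
      rw [pow_zero, Matrix.one_apply_ne]
      rintro rfl
      omega
    | succ r ih =>
      intro i j hij
      rw [pow_succ, Matrix.mul_apply]
      refine Finset.sum_eq_zero fun l _ => ?_
      by_cases hl : (l : ℕ) < i + r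
      · rw [ih i l hl, zero_mul]
      · rw [h l j (by omega), mul_zero]
  refine ⟨n, ?_⟩
  ext i j
  rw [key n i j (by omega)]
  rfl

theorem aux_telescope {P : Type*} [Ring P] (b : P) (x : ℕ → P) (r : ℕ) :
    ∑ l ∈ Finset.range r, b * (-b) ^ l * (x l + b * x (l + 1)) =
      b * x 0 - b * (-b) ^ r * x r := by
  induction r with
  | zero => simp
  | succ r ih =>
    rw [Finset.sum_range_succ, ih, pow_succ]
    noncomm_ring

theorem aux_sign {P : Type*} [Ring P] (b : P) (r : ℕ) :
    (-1 : P) ^ (r + 1 + 1) * b ^ (r + 1) = b * (-b) ^ r := by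
  rw [neg_pow b r, pow_succ' b r, ← mul_assoc, ← mul_assoc,
    ((Commute.neg_one_right b).pow_right r).eq]
  simp [pow_succ]

/-- The matrix with entries given by a function on natural numbers. -/
def auxMat {P : Type*} (n : ℕ) (f : ℕ → ℕ → P) : Matrix (Fin n) (Fin n) P :=
  Matrix.of fun i j => f i j

theorem auxMat_mul {P : Type*} [Ring P] (n : ℕ) (f g : ℕ → ℕ → P) (i j : Fin n) :
    (auxMat n f * auxMat n g) i j = ∑ l ∈ Finset.range n, f i l * g l j := by
  rw [Matrix.mul_apply, ← Fin.sum_univ_eq_sum_range (fun l => f i l * g l j) n]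
  rfl

/-- Row operations. -/
def auxN {P : Type*} [Ring P] (k : ℕ) (b : P) (i l : ℕ) : P :=
  if i = 0 ∧ 1 ≤ l ∧ l < k then b * (-b) ^ (l - 1)
  else if i = k ∧ k < l then b * (-b) ^ (l - k - 1) else 0

/-- Permuted target. -/
def auxD {P : Type*} [Ring P] (n k : ℕ) (p q u v : P) (i l : ℕ) : P :=
  if i = 0 then (if l = k - 1 then p else if l = n - 1 then v else 0)
  else if i = k then (if l = k - 1 then u else if l = n - 1 then q else 0)
  else if l + 1 = i then 1 else 0

/-- Strictly upper triangular part of the column operations. -/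
def auxW {P : Type*} [Ring P] (n k : ℕ) (b : P) (i j : ℕ) : P :=
  if i = k - 1 ∨ i = n - 1 then 0 else if j = i + 1 then b else 0

/-- The matrix `B` as a function of natural numbers. -/
def auxB {P : Type*} [Ring P] (n k : ℕ) (b u v : P) (i j : ℕ) : P :=
  if i = j then b
  else if i = j + 1 then (if j = k - 1 then u else 1)
  else if i = 0 ∧ j = n - 1 then v
  else 0

/-- Kronecker delta. -/
def auxδ {P : Type*} [Ring P] (j l : ℕ) : P := if l = j then 1 else 0

theorem auxB_zero {P : Type*} [Ring P] (c d j : ℕ) (b u v : P) :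
    auxB (c + 1 + (d + 1)) (c + 1) b u v 0 j = b * auxδ j 0 + v * auxδ j (c + 1 + d) := by
  unfold auxB auxδ
  split_ifs <;> first | omega | (simp; done) | (exfalso; tauto)

theorem auxB_k {P : Type*} [Ring P] (c d j : ℕ) (b u v : P) :
    auxB (c + 1 + (d + 1)) (c + 1) b u v (c + 1) j = u * auxδ j c + b * auxδ j (c + 1) := by
  unfold auxB auxδ
  split_ifs <;> first | omega | (simp; done) | (exfalso; tauto)

theorem auxB_other {P : Type*} [Ring P] (c d i j : ℕ) (b u v : P) (hi : i ≠ c) :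
    auxB (c + 1 + (d + 1)) (c + 1) b u v (i + 1) j = auxδ j i + b * auxδ j (i + 1) := by
  unfold auxB auxδ
  split_ifs <;> first | omega | (simp; done) | (exfalso; tauto)

theorem aux_row_zero {P : Type*} [Ring P] (c d : ℕ) (b : P) (g : ℕ → P) :
    ∑ l ∈ Finset.range (c + 1 + (d + 1)), auxN (c + 1) b 0 l * g l =
      ∑ l ∈ Finset.range c, b * (-b) ^ l * g (l + 1) := by
  rw [Finset.sum_range_add, Finset.sum_range_succ']
  have h1 : ∑ x ∈ Finset.range (d + 1), auxN (c + 1) b 0 (c + 1 + x) * g (c + 1 + x) = 0 := by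
    refine Finset.sum_eq_zero fun x _ => ?_
    unfold auxN
    rw [if_neg (by omega), if_neg (by omega), zero_mul]
  have h2 : auxN (c + 1) b 0 0 = 0 := by simp [auxN]
  rw [h1, h2, zero_mul, add_zero, add_zero]
  refine Finset.sum_congr rfl fun l hl => ?_
  rw [Finset.mem_range] at hl
  simp [auxN, hl]

theorem aux_row_k {P : Type*} [Ring P] (c d : ℕ) (b : P) (g : ℕ → P) :
    ∑ l ∈ Finset.range (c + 1 + (d + 1)), auxN (c + 1) b (c + 1) l * g l =
      ∑ l ∈ Finset.range d, b * (-b) ^ l * g (c + 1 + l + 1) := by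
  rw [Finset.sum_range_add, Finset.sum_range_succ' _ d]
  have h1 : ∑ x ∈ Finset.range (c + 1), auxN (c + 1) b (c + 1) x * g x = 0 := by
    refine Finset.sum_eq_zero fun x hx => ?_
    rw [Finset.mem_range] at hx
    have : ¬ (c + 1 < x) := by omega
    simp [auxN, this]
  have h2 : auxN (c + 1) b (c + 1) (c + 1 + 0) = 0 := by simp [auxN]
  rw [h1, h2, zero_mul, add_zero, zero_add]
  refine Finset.sum_congr rfl fun l hl => ?_
  have e : c + 1 + (l + 1) - (c + 1) - 1 = l := by omega
  have e2 : c + 1 < c + 1 + (l + 1) := by omega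
  unfold auxN
  rw [if_neg (by omega), if_pos ⟨rfl, e2⟩, e]
  rfl

theorem aux_two {P : Type*} [Ring P] (c d : ℕ) (p q : P) (g : ℕ → P) :
    ∑ l ∈ Finset.range (c + 1 + (d + 1)),
      (if l = c then p else if l = c + 1 + d then q else 0) * g l =
      p * g c + q * g (c + 1 + d) := by
  have : ∀ l, (if l = c then p else if l = c + 1 + d then q else 0) * g l =
      (if l = c then p * g l else 0) + (if l = c + 1 + d then q * g l else 0) := by
    intro l
    split_ifs <;> first | omega | (simp; done) | (exfalso; tauto)
  simp_rw [this, Finset.sum_add_distrib, Finset.sum_ite_eq', Finset.mem_range]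
  rw [if_pos (by omega), if_pos (by omega)]

/-- Column operations. -/
def auxV {P : Type*} [Ring P] (n k : ℕ) (b : P) (i j : ℕ) : P :=
  auxδ j i + auxW n k b i j

theorem aux_main {P : Type*} [Ring P] (c d i j : ℕ) (b u v : P) (hi : i < c + 1 + (d + 1)) :
    auxB (c + 1 + (d + 1)) (c + 1) b u v i j -
      ∑ l ∈ Finset.range (c + 1 + (d + 1)),
        auxN (c + 1) b i l * auxB (c + 1 + (d + 1)) (c + 1) b u v l j =
    ∑ l ∈ Finset.range (c + 1 + (d + 1)),
      auxD (c + 1 + (d + 1)) (c + 1) (b * (-b) ^ c) (b * (-b) ^ d) u v i l *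
        auxV (c + 1 + (d + 1)) (c + 1) b l j := by
  have v1 : auxV (c + 1 + (d + 1)) (c + 1) b c j = auxδ j c := by
    simp [auxV, auxW]
  have v2 : auxV (c + 1 + (d + 1)) (c + 1) b (c + 1 + d) j = auxδ j (c + 1 + d) := by
    simp [auxV, auxW, ← add_assoc]
  have e1 : c + 1 - 1 = c := by omega
  have e2 : c + 1 + (d + 1) - 1 = c + 1 + d := by omega
  by_cases h0 : i = 0
  · subst h0
    rw [aux_row_zero]
    simp only [auxD, if_true, e1, e2]
    rw [aux_two, v1, v2, auxB_zero]
    have : ∀ l ∈ Finset.range c, b * (-b) ^ l *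
        auxB (c + 1 + (d + 1)) (c + 1) b u v (l + 1) j =
        b * (-b) ^ l * (auxδ j l + b * auxδ j (l + 1)) := by
      intro l hl
      rw [Finset.mem_range] at hl
      rw [auxB_other _ _ _ _ _ _ _ (by omega)]
    rw [Finset.sum_congr rfl this, aux_telescope b (auxδ j) c]
    abel
  by_cases hk : i = c + 1
  · subst hk
    rw [aux_row_k]
    simp only [auxD, if_true, e1, e2, h0, if_false]
    rw [aux_two, v1, v2, auxB_k]
    have : ∀ l ∈ Finset.range d, b * (-b) ^ l *
        auxB (c + 1 + (d + 1)) (c + 1) b u v (c + 1 + l + 1) j =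
        b * (-b) ^ l * (auxδ j (c + 1 + l) + b * auxδ j (c + 1 + (l + 1))) := by
      intro l hl
      rw [auxB_other _ _ _ _ _ _ _ (by omega)]
      rfl
    rw [Finset.sum_congr rfl this, aux_telescope b (fun l => auxδ j (c + 1 + l)) d]
    simp only [add_zero]
    abel
  · obtain ⟨i, rfl⟩ : ∃ i', i = i' + 1 := ⟨i - 1, by omega⟩
    have : ∀ l, auxN (c + 1) b (i + 1) l = 0 := by
      intro l
      unfold auxN
      rw [if_neg (by omega), if_neg (by omega)]
    simp only [this, zero_mul, Finset.sum_const_zero, sub_zero, auxD, h0, hk, if_false,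
      add_left_inj, ite_mul, one_mul, Finset.sum_ite_eq', Finset.mem_range]
    rw [if_pos (by omega), auxB_other _ _ _ _ _ _ _ (by omega)]
    unfold auxV auxW
    rw [if_neg (by omega)]
    unfold auxδ
    congr 1
    split_ifs <;> first | omega | (simp; done) | (exfalso; tauto)

theorem auxN_sq {P : Type*} [Ring P] (n k : ℕ) (b : P) :
    auxMat n (auxN k b) * auxMat n (auxN k b) = 0 := by
  ext i j
  rw [auxMat_mul]
  refine Finset.sum_eq_zero fun l _ => ?_
  unfold auxN
  split_ifs <;> first | omega | (simp; done) | (exfalso; tauto)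

/-- Row permutation. -/
def auxσ (n k j : ℕ) : ℕ :=
  if j < k - 1 then j + 1 else if j < n - 2 then j + 2 else if j = n - 2 then 0 else k

/-- Column permutation. -/
def auxτ (n k j : ℕ) : ℕ :=
  if j < k - 1 then j else if j < n - 2 then j + 1 else if j = n - 2 then k - 1 else n - 1

theorem aux_perm_entry {P : Type*} [Ring P] (c d i j : ℕ) (p q u v : P)
    (hn : 3 ≤ c + 1 + (d + 1)) (hi : i < c + 1 + (d + 1)) (hj : j < c + 1 + (d + 1)) :
    (if i = j ∧ i < c + 1 + (d + 1) - 2 then 1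
        else if i = c + 1 + (d + 1) - 2 ∧ j = c + 1 + (d + 1) - 2 then p
        else if i = c + 1 + (d + 1) - 2 ∧ j = c + 1 + (d + 1) - 1 then v
        else if i = c + 1 + (d + 1) - 1 ∧ j = c + 1 + (d + 1) - 2 then u
        else if i = c + 1 + (d + 1) - 1 ∧ j = c + 1 + (d + 1) - 1 then q
        else 0) =
      auxD (c + 1 + (d + 1)) (c + 1) p q u v (auxσ (c + 1 + (d + 1)) (c + 1) i)
        (auxτ (c + 1 + (d + 1)) (c + 1) j) := by
  by_cases hi1 : i < c + 1 + (d + 1) - 2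
  · have s0 : auxσ (c + 1 + (d + 1)) (c + 1) i ≠ 0 := by unfold auxσ; split_ifs <;> first | omega | (simp; omega)
    have s1 : auxσ (c + 1 + (d + 1)) (c + 1) i ≠ c + 1 := by unfold auxσ; split_ifs <;> first | omega | (simp; omega)
    have s2 : auxτ (c + 1 + (d + 1)) (c + 1) j + 1 = auxσ (c + 1 + (d + 1)) (c + 1) i ↔
        i = j := by
      unfold auxσ auxτ; split_ifs <;> first | omega | (simp; omega)
    unfold auxD
    rw [if_neg s0, if_neg s1]
    simp only [s2]
    split_ifs <;> first | rfl | omega | (exfalso; tauto)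
  · have t1 : auxτ (c + 1 + (d + 1)) (c + 1) j = c + 1 - 1 ↔ j = c + 1 + (d + 1) - 2 := by
      unfold auxτ; split_ifs <;> first | omega | (simp; omega)
    have t2 : auxτ (c + 1 + (d + 1)) (c + 1) j = c + 1 + (d + 1) - 1 ↔
        j = c + 1 + (d + 1) - 1 := by
      unfold auxτ; split_ifs <;> first | omega | (simp; omega)
    have s1 : auxσ (c + 1 + (d + 1)) (c + 1) i = 0 ↔ i = c + 1 + (d + 1) - 2 := by
      unfold auxσ; split_ifs <;> first | omega | (simp; omega)
    have s2 : auxσ (c + 1 + (d + 1)) (c + 1) i = c + 1 ↔ i = c + 1 + (d + 1) - 1 := by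
      unfold auxσ; split_ifs <;> first | omega | (simp; omega)
    unfold auxD
    simp only [s1, s2, t1, t2]
    split_ifs <;> first | rfl | omega | (exfalso; tauto)

theorem aux_equiv (n : ℕ) (f : ℕ → ℕ) (h1 : ∀ i, i < n → f i < n)
    (h2 : ∀ i j, i < n → j < n → f i = f j → i = j) :
    ∃ e : Fin n ≃ Fin n, ∀ i : Fin n, (e i : ℕ) = f i := by
  let g : Fin n → Fin n := fun i => ⟨f i, h1 i i.2⟩
  have hg : Function.Injective g := by
    intro i j hij
    exact Fin.ext (h2 i j i.2 j.2 (congrArg Fin.val hij))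
  exact ⟨Equiv.ofBijective g (Finite.injective_iff_bijective.mp hg), fun i => rfl⟩

/-- **Corollary 2.20, first part.** Let `𝔓` be a (not necessarily commutative) ring with
identity, `n ≥ 3`, `1 ≤ k ≤ n - 1`, `m = n - k`, `b ∈ 𝔓` and `u`, `v` central elements
of `𝔓`.  The matrix `B_k` with `b` on the diagonal, `1` on the first subdiagonal except for
the entry `u` in (1-based) position `(k+1, k)`, and `v` in the upper right corner, is
equivalent to `I_{n-2} ⊕ [[(-1)^(k+1) b^k, v], [u, (-1)^(m+1) b^m]]`
(matrices below are `0`-indexed). -/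
theorem stmt3 {P : Type*} [Ring P] (n k : ℕ) (hn : 3 ≤ n) (hk1 : 1 ≤ k) (hk2 : k ≤ n - 1)
    (b u v : P) (hu : ∀ a : P, a * u = u * a) (hv : ∀ a : P, a * v = v * a)
    (B : Matrix (Fin n) (Fin n) P)
    (hB : ∀ i j : Fin n, B i j =
      if (i : ℕ) = (j : ℕ) then b
      else if (i : ℕ) = (j : ℕ) + 1 then (if (j : ℕ) = k - 1 then u else 1)
      else if (i : ℕ) = 0 ∧ (j : ℕ) = n - 1 then v
      else 0) :
    ∃ U V : Matrix (Fin n) (Fin n) P, IsUnit U ∧ IsUnit V ∧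
      B = U * (Matrix.of fun i j : Fin n =>
        if (i : ℕ) = (j : ℕ) ∧ (i : ℕ) < n - 2 then 1
        else if (i : ℕ) = n - 2 ∧ (j : ℕ) = n - 2 then (-1 : P) ^ (k + 1) * b ^ k
        else if (i : ℕ) = n - 2 ∧ (j : ℕ) = n - 1 then v
        else if (i : ℕ) = n - 1 ∧ (j : ℕ) = n - 2 then u
        else if (i : ℕ) = n - 1 ∧ (j : ℕ) = n - 1 then (-1 : P) ^ (n - k + 1) * b ^ (n - k)
        else 0) * V := by
  obtain ⟨c, rfl⟩ : ∃ c, k = c + 1 := ⟨k - 1, by omega⟩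
  obtain ⟨d, rfl⟩ : ∃ d, n = c + 1 + (d + 1) := ⟨n - (c + 1) - 1, by omega⟩
  obtain ⟨σ, hσ⟩ := aux_equiv (c + 1 + (d + 1)) (auxσ (c + 1 + (d + 1)) (c + 1))
    (by intro i hi; unfold auxσ; split_ifs <;> omega)
    (by intro i j hi hj h; unfold auxσ at h; split_ifs at h <;> omega)
  obtain ⟨τ, hτ⟩ := aux_equiv (c + 1 + (d + 1)) (auxτ (c + 1 + (d + 1)) (c + 1))
    (by intro i hi; unfold auxτ; split_ifs <;> omega)
    (by intro i j hi hj h; unfold auxτ at h; split_ifs at h <;> omega)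
  have hBB : B = auxMat _ (auxB (c + 1 + (d + 1)) (c + 1) b u v) := by
    ext i j
    rw [hB]
    rfl
  have e3 : c + 1 + (d + 1) - (c + 1) = d + 1 := by omega
  rw [e3, aux_sign, aux_sign]
  have hM : (Matrix.of fun i j : Fin (c + 1 + (d + 1)) =>
        if (i : ℕ) = (j : ℕ) ∧ (i : ℕ) < c + 1 + (d + 1) - 2 then 1
        else if (i : ℕ) = c + 1 + (d + 1) - 2 ∧ (j : ℕ) = c + 1 + (d + 1) - 2 then b * (-b) ^ c
        else if (i : ℕ) = c + 1 + (d + 1) - 2 ∧ (j : ℕ) = c + 1 + (d + 1) - 1 then v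
        else if (i : ℕ) = c + 1 + (d + 1) - 1 ∧ (j : ℕ) = c + 1 + (d + 1) - 2 then u
        else if (i : ℕ) = c + 1 + (d + 1) - 1 ∧ (j : ℕ) = c + 1 + (d + 1) - 1 then b * (-b) ^ d
        else 0) =
      (auxMat (c + 1 + (d + 1)) (auxD (c + 1 + (d + 1)) (c + 1) (b * (-b) ^ c) (b * (-b) ^ d)
        u v)).submatrix σ τ := by
    ext i j
    simp only [Matrix.of_apply, Matrix.submatrix_apply, auxMat, hσ, hτ]
    exact aux_perm_entry c d i j _ _ u v hn i.2 j.2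
  rw [hM]
  generalize hD : auxMat (c + 1 + (d + 1)) (auxD (c + 1 + (d + 1)) (c + 1) (b * (-b) ^ c)
    (b * (-b) ^ d) u v) = D
  set N := auxMat (c + 1 + (d + 1)) (auxN (c + 1) b) with hN
  set W := auxMat (c + 1 + (d + 1)) (auxW (c + 1 + (d + 1)) (c + 1) b) with hW
  have hNN : N * N = 0 := auxN_sq _ _ _
  have hUN : (1 + N) * (1 - N) = 1 := by
    rw [add_mul, mul_sub, mul_sub, hNN]; simp
  have hUN2 : (1 - N) * (1 + N) = 1 := by
    rw [sub_mul, mul_add, mul_add, hNN]; simp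
  have hV : 1 + W = auxMat _ (auxV (c + 1 + (d + 1)) (c + 1) b) := by
    ext i j
    rw [Matrix.add_apply, Matrix.one_apply]
    simp only [hW, auxMat, auxV, auxδ, Matrix.of_apply, Fin.ext_iff]
  have hVu : IsUnit (1 + W) := by
    apply IsNilpotent.isUnit_one_add
    apply aux_upper_nil
    intro i j hij
    simp only [hW, auxMat, auxW, Matrix.of_apply]
    split_ifs <;> first | omega | rfl
  have hmain : (1 - N) * B = D * (1 + W) := by
    rw [hV, ← hD, hBB, sub_mul, one_mul]
    ext i j
    rw [auxMat_mul, Matrix.sub_apply, auxMat_mul]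
    exact aux_main c d i j b u v i.2
  have hperm : D = (1 : Matrix _ _ P).submatrix id σ * D.submatrix σ τ *
      (1 : Matrix _ _ P).submatrix id τ.symm := by
    have h1 : (1 : Matrix _ _ P).submatrix id σ * D.submatrix σ τ = D.submatrix id τ := by
      rw [Matrix.submatrix_mul_equiv, one_mul]
    have h2 : (1 : Matrix _ _ P).submatrix id τ.symm =
        (1 : Matrix _ _ P).submatrix τ id := by
      ext i j
      simp [Matrix.one_apply, Equiv.eq_symm_apply]
    rw [h1, h2, Matrix.submatrix_mul_equiv, mul_one]
    simp
  refine ⟨(1 + N) * (1 : Matrix _ _ P).submatrix id σ,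
    (1 : Matrix _ _ P).submatrix id τ.symm * (1 + W), ?_, ?_, ?_⟩
  · exact IsUnit.mul ⟨⟨1 + N, 1 - N, hUN, hUN2⟩, rfl⟩ (aux_perm_isUnit σ)
  · exact (aux_perm_isUnit τ.symm).mul hVu
  · calc B = (1 + N) * ((1 - N) * B) := by rw [← mul_assoc, hUN, one_mul]
      _ = (1 + N) * (((1 : Matrix _ _ P).submatrix id σ * D.submatrix σ τ *
          (1 : Matrix _ _ P).submatrix id τ.symm) * (1 + W)) := by rw [hmain, ← hperm]
      _ = _ := by simp only [mul_assoc]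
end

section
/- Let 𝔓 be a (not necessarily commutative) ring with identity, let n ≥ 3 be an integer, let b ∈ 𝔓 and let u, v be central elements of 𝔓. Let D ∈ M_n(𝔓) be the matrix with (i,i)-entry b for 1 ≤ i ≤ n, (i+1,i)-entry 1 for 1 ≤ i ≤ n−1, (1,n)-entry uv, and all other entries 0. Then D is equivalent to the block diagonal matrix I_{n−2} ⊕ [[(−1)^n b^{n−1}, uv],[1, b]], where I_{n−2} is the identity matrix of size n−2. -/
/-- The cyclic permutation of the first `m + 1` indices. -/
theorem rowPerm (m : ℕ) : ∃ s : Equiv.Perm (Fin (m + 2)), ∀ i, (s i : ℕ) =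
    if (i : ℕ) = 0 then m else if (i : ℕ) ≤ m then (i : ℕ) - 1 else i := by
  refine ⟨⟨fun i => ⟨if (i : ℕ) = 0 then m else if (i : ℕ) ≤ m then (i : ℕ) - 1 else i,
      by split_ifs <;> omega⟩,
    fun i => ⟨if (i : ℕ) < m then i + 1 else if (i : ℕ) = m then 0 else i,
      by split_ifs <;> omega⟩, ?_, ?_⟩, fun i => rfl⟩
  · intro i
    apply Fin.ext
    dsimp only
    grind
  · intro i
    apply Fin.ext
    dsimp only
    grind

/-- **Corollary 2.20, second part.** Let `𝔓` be a (not necessarily commutative) ring with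
identity, `n ≥ 3`, `b ∈ 𝔓` and `u`, `v` central elements of `𝔓`.  The matrix `D` with `b`
on the diagonal, `1` on the first subdiagonal and `u * v` in the upper right corner is
equivalent to `I_{n-2} ⊕ [[(-1)^n b^(n-1), u v], [1, b]]` (matrices below are `0`-indexed). -/
theorem stmt4 {P : Type*} [Ring P] (n : ℕ) (hn : 3 ≤ n)
    (b u v : P) (hu : ∀ a : P, a * u = u * a) (hv : ∀ a : P, a * v = v * a)
    (D : Matrix (Fin n) (Fin n) P)
    (hD : ∀ i j : Fin n, D i j =
      if (i : ℕ) = (j : ℕ) then b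
      else if (i : ℕ) = (j : ℕ) + 1 then 1
      else if (i : ℕ) = 0 ∧ (j : ℕ) = n - 1 then u * v
      else 0) :
    ∃ U V : Matrix (Fin n) (Fin n) P, IsUnit U ∧ IsUnit V ∧
      D = U * (Matrix.of fun i j : Fin n =>
        if (i : ℕ) = (j : ℕ) ∧ (i : ℕ) < n - 2 then 1
        else if (i : ℕ) = n - 2 ∧ (j : ℕ) = n - 2 then (-1 : P) ^ n * b ^ (n - 1)
        else if (i : ℕ) = n - 2 ∧ (j : ℕ) = n - 1 then u * v
        else if (i : ℕ) = n - 1 ∧ (j : ℕ) = n - 2 then 1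
        else if (i : ℕ) = n - 1 ∧ (j : ℕ) = n - 1 then b
        else 0) * V := by
  classical
  obtain ⟨m, rfl⟩ : ∃ m, n = m + 2 := ⟨n - 2, by omega⟩
  have e2 : m + 2 - 2 = m := by omega
  have e1 : m + 2 - 1 = m + 1 := by omega
  simp only [e2, e1] at hD ⊢
  set T : Matrix (Fin (m + 2)) (Fin (m + 2)) P := Matrix.of fun i j : Fin (m + 2) =>
        if (i : ℕ) = (j : ℕ) ∧ (i : ℕ) < m then 1
        else if (i : ℕ) = m ∧ (j : ℕ) = m then (-1 : P) ^ (m + 2) * b ^ (m + 1)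
        else if (i : ℕ) = m ∧ (j : ℕ) = m + 1 then u * v
        else if (i : ℕ) = m + 1 ∧ (j : ℕ) = m then 1
        else if (i : ℕ) = m + 1 ∧ (j : ℕ) = m + 1 then b
        else 0 with hT
  let N : Matrix (Fin (m + 2)) (Fin (m + 2)) P := Matrix.of fun i j =>
    if (j : ℕ) = (i : ℕ) + 1 ∧ (i : ℕ) < m then b else 0
  let r : Matrix (Fin (m + 2)) (Fin (m + 2)) P := Matrix.of fun i j =>
    if (i : ℕ) = 0 ∧ 1 ≤ (j : ℕ) ∧ (j : ℕ) ≤ m then (-b) ^ (j : ℕ) else 0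
  have hNk : ∀ k : ℕ, ∀ i j : Fin (m + 2), (j : ℕ) < i + k → (N ^ k) i j = 0 := by
    intro k
    induction k with
    | zero =>
      intro i j h
      rw [pow_zero, Matrix.one_apply_ne]
      rintro rfl
      omega
    | succ k ih =>
      intro i j h
      rw [pow_succ, Matrix.mul_apply]
      refine Finset.sum_eq_zero fun l _ => ?_
      by_cases hl : (l : ℕ) < i + k
      · rw [ih i l hl, zero_mul]
      · have : N l j = 0 := by
          simp only [N, Matrix.of_apply]
          rw [if_neg (by omega)]
        rw [this, mul_zero]
  have hNil : IsNilpotent N := ⟨m + 2, by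
    ext i j
    exact hNk _ i j (by omega)⟩
  have hrr : r * r = 0 := by
    ext i j
    rw [Matrix.mul_apply]
    refine Finset.sum_eq_zero fun l _ => ?_
    simp only [r, Matrix.of_apply]
    by_cases hl : (l : ℕ) = 0
    · rw [if_neg (by omega), zero_mul]
    · rw [if_neg (c := (l : ℕ) = 0 ∧ _) (by omega), mul_zero]
  obtain ⟨s, hs⟩ := rowPerm m
  let Q : Matrix (Fin (m + 2)) (Fin (m + 2)) P := (1 : Matrix _ _ P).submatrix s id
  let Q' : Matrix (Fin (m + 2)) (Fin (m + 2)) P := (1 : Matrix _ _ P).submatrix s.symm id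
  have hQ : ∀ X : Matrix (Fin (m + 2)) (Fin (m + 2)) P, Q * X = X.submatrix s id := by
    intro X
    ext i j
    simp [Q, Matrix.mul_apply, Matrix.one_apply]
  have hQ' : ∀ X : Matrix (Fin (m + 2)) (Fin (m + 2)) P, Q' * X = X.submatrix s.symm id := by
    intro X
    ext i j
    simp [Q', Matrix.mul_apply, Matrix.one_apply]
  have hQu : IsUnit Q := by
    refine ⟨⟨Q, Q', ?_, ?_⟩, rfl⟩
    · rw [hQ]
      ext i j
      simp [Q', Matrix.one_apply]
    · rw [hQ']
      ext i j
      simp [Q, Matrix.one_apply]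
  have hR1 : (1 - r) * (1 + r) = 1 := by
    rw [sub_mul, one_mul, mul_add, mul_one, hrr]
    abel
  have hR2 : (1 + r) * (1 - r) = 1 := by
    rw [add_mul, one_mul, mul_sub, mul_one, hrr]
    abel
  have hRu : IsUnit (1 - r) := ⟨⟨1 - r, 1 + r, hR1, hR2⟩, rfl⟩
  have hTN : T * N = N := by
    ext i j
    rw [Matrix.mul_apply]
    have : ∀ l, T i l * N l j = if l = i then N i j else 0 := by
      intro l
      by_cases hl : (l : ℕ) < m
      · by_cases hli : l = i
        · subst hli
          simp [hT, hl]
        · have hli' : (l : ℕ) ≠ i := fun h => hli (Fin.ext h)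
          have : T i l = 0 := by
            simp only [hT, Matrix.of_apply]
            repeat rw [if_neg (by omega)]
          rw [this, if_neg hli, zero_mul]
      · have : N l j = 0 := by
          simp only [N, Matrix.of_apply]
          rw [if_neg (by omega)]
        rw [this, mul_zero]
        split_ifs with h
        · rw [← h, this]
        · rfl
    simp [this]
  have key : (1 + r) * D = Q * (T * (1 + N)) := by
    rw [hQ, mul_add, mul_one, hTN, add_mul, one_mul]
    ext i j
    rw [Matrix.submatrix_apply, Matrix.add_apply, Matrix.add_apply, id]
    by_cases hi : (i : ℕ) = 0
    · have hsi : (s i : ℕ) = m := by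
        rw [hs, if_pos hi]
      have hN0 : N (s i) j = 0 := by
        simp only [N, Matrix.of_apply]
        rw [if_neg (by omega)]
      rw [hN0, add_zero, Matrix.mul_apply]
      by_cases hj : (j : ℕ) = m + 1
      · rw [Finset.sum_eq_zero, hD, hT, Matrix.of_apply, hsi, hi, hj]
        · simp
        · intro l _
          by_cases hl : 1 ≤ (l : ℕ) ∧ (l : ℕ) ≤ m
          · rw [hD, if_neg (by omega), if_neg (by omega), if_neg (by omega), mul_zero]
          · simp only [r, Matrix.of_apply]
            rw [if_neg (by tauto), zero_mul]
      · have hterm : ∀ l, r i l * D l j = (if l = j then r i j * b else 0) +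
            (if l = ⟨j + 1, by omega⟩ then r i ⟨j + 1, by omega⟩ else 0) := by
          intro l
          rw [hD]
          by_cases h1 : l = j
          · subst h1
            simp [Fin.ext_iff]
          · have h1' : (l : ℕ) ≠ j := fun h => h1 (Fin.ext h)
            rw [if_neg h1', if_neg h1, zero_add]
            by_cases h2 : (l : ℕ) = j + 1
            · have h2' : l = ⟨j + 1, by omega⟩ := Fin.ext h2
              rw [if_pos h2, if_pos h2', mul_one, h2']
            · have h2' : l ≠ ⟨j + 1, by omega⟩ := fun h => h2 (congrArg Fin.val h)
              rw [if_neg h2, if_neg h2', if_neg (by omega), mul_zero]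
        simp only [hterm, Finset.sum_add_distrib, Finset.sum_ite_eq', Finset.mem_univ, if_true]
        rw [hD, hT, Matrix.of_apply, hsi, hi]
        simp only [r, Matrix.of_apply, hi]
        by_cases hj0 : (j : ℕ) = 0
        · have : 1 ≤ m := by omega
          have : m ≠ 0 := by omega
          simp [hj0, *]
          try omega
        · by_cases hjm : (j : ℕ) = m
          · have h1 : (-b) ^ m * b = (-1) ^ (m + 2) * b ^ (m + 1) := by
              rw [neg_pow, pow_succ b, pow_add]; simp [mul_assoc]
            have : 1 ≤ m := by omega
            have : ¬ 0 = m := by omega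
            simp [hjm, h1, *]
          · have h3 : (j : ℕ) + 1 ≤ m := by omega
            have h4 : (j : ℕ) ≤ m := by omega
            have h5 : 1 ≤ (j : ℕ) := by omega
            have h6 : ¬ 0 = (j : ℕ) := by omega
            simp [hjm, hj, h3, h4, h5, h6, pow_succ]
    · have hr0 : (r * D) i j = 0 := by
        rw [Matrix.mul_apply]
        refine Finset.sum_eq_zero fun l _ => ?_
        simp only [r, Matrix.of_apply]
        rw [if_neg (by tauto), zero_mul]
      have hsi : (s i : ℕ) = if (i : ℕ) ≤ m then (i : ℕ) - 1 else i := by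
        rw [hs, if_neg hi]
      rw [hr0, add_zero, hD, hT, Matrix.of_apply]
      simp only [N, Matrix.of_apply]
      generalize (s i : ℕ) = k at hsi
      clear_value T
      clear hr0 hTN hRu hR1 hR2 hQu hQ hQ' hrr hNil hNk hT
      by_cases him : (i : ℕ) ≤ m
      · rw [if_pos him] at hsi
        have hk : (i : ℕ) = k + 1 := by omega
        rw [if_neg (c := (i : ℕ) = 0 ∧ _) (by omega), hk]
        by_cases h1 : (j : ℕ) = k + 1
        · rw [if_pos h1.symm, if_pos (c := (j : ℕ) = k + 1 ∧ _) (by omega)]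
          repeat rw [if_neg (by omega)]
          rw [zero_add]
        · rw [if_neg (Ne.symm h1), if_neg (c := (j : ℕ) = k + 1 ∧ _) (by omega), add_zero]
          by_cases h2 : k = (j : ℕ)
          · rw [if_pos (by omega), if_pos (by omega)]
          · repeat rw [if_neg (by omega)]
      · rw [if_neg him] at hsi
        have hk : (i : ℕ) = m + 1 := by omega
        rw [hk] at hsi
        rw [hk, hsi, if_neg (c := (j : ℕ) = m + 1 + 1 ∧ _) (by omega), add_zero]
        by_cases h1 : (j : ℕ) = m + 1
        · simp [h1]
        · by_cases h2 : (j : ℕ) = m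
          · simp [h2]
          · repeat rw [if_neg (by omega)]
  refine ⟨(1 - r) * Q, 1 + N, hRu.mul hQu, hNil.isUnit_one_add, ?_⟩
  calc D = ((1 - r) * (1 + r)) * D := by rw [hR1, one_mul]
    _ = (1 - r) * (Q * (T * (1 + N))) := by rw [mul_assoc, key]
    _ = _ := by simp only [mul_assoc]
end

section
/- Let K be a field of prime characteristic p such that b := [K:K^p] is finite, and let S = K[x_1,…,x_n]. Let f = x_1^{d_1}⋯x_n^{d_n} with each d_j a non-negative integer, and let e ≥ 1 be an integer such that q = p^e > max{d_1,…,d_n} + 1. Let 1 ≤ k ≤ q−1. Set Γ = {c = (c_1,…,c_n) ∈ ℤ^n : 0 ≤ c_j ≤ d_j for all j}, and for c ∈ Γ set η_k(c) = b^e · ∏_{j=1}^n max(0, q − |c_j q − k d_j|). Then F_*^e(S/f^kS) is isomorphic, as an S-module, to ⊕_{c∈Γ} (S/x^cS)^{⊕η_k(c)}, where x^c = x_1^{c_1}⋯x_n^{c_n}. -/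
universe u v

/-- `FStar φ M` is the module `M` with scalars twisted by the ring endomorphism `φ`;
for `φ` the `e`-th iterate of Frobenius this is the Frobenius pushforward `F_*^e M`. -/
def FStar {R : Type u} [CommSemiring R] (φ : R →+* R) (M : Type v) : Type v := M

instance {R : Type u} [CommSemiring R] (φ : R →+* R) (M : Type v) [AddCommGroup M] :
    AddCommGroup (FStar φ M) := inferInstanceAs (AddCommGroup M)

instance {R : Type u} [CommSemiring R] (φ : R →+* R) (M : Type v) [AddCommGroup M]
    [Module R M] : Module R (FStar φ M) := Module.compHom M φ

theorem aux_basis {K : Type u} [Field K] {p : ℕ} [Fact p.Prime] [CharP K p]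
    (b : ℕ) (lam : Fin b → K)
    (hlam : ∀ x : K, ∃! a : Fin b → K, x = ∑ i, a i ^ p * lam i) (e : ℕ) :
    ∃ mu : Fin (b ^ e) → K, ∀ x : K, ∃! a : Fin (b ^ e) → K, x = ∑ i, a i ^ p ^ e * mu i := by
  induction e with
  | zero =>
    refine ⟨fun _ => 1, fun x => ⟨fun _ => x, ?_, fun a ha => ?_⟩⟩
    · have : Unique (Fin (b ^ 0)) := by rw [pow_zero]; infer_instance
      change x = ∑ _i : Fin (b ^ 0), x ^ p ^ 0 * 1
      rw [Fintype.sum_unique]; simp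
    funext i
    simp only [pow_zero, pow_one, mul_one] at ha
    have : Subsingleton (Fin (b ^ 0)) := by rw [pow_zero]; infer_instance
    rw [ha, Fintype.sum_subsingleton _ i]
  | succ e ih =>
    obtain ⟨mu, hmu⟩ := ih
    let E : Fin (b ^ (e + 1)) ≃ Fin (b ^ e) × Fin b :=
      (finCongr (pow_succ b e)).trans finProdFinEquiv.symm
    have key : ∀ a : Fin (b ^ (e + 1)) → K,
        ∑ i, a i ^ p ^ (e + 1) * (mu (E i).1 ^ p * lam (E i).2)
          = ∑ l, (∑ i, a (E.symm (i, l)) ^ p ^ e * mu i) ^ p * lam l := by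
      intro a
      rw [← E.symm.sum_comp, Fintype.sum_prod_type, Finset.sum_comm]
      refine Finset.sum_congr rfl fun l _ => ?_
      rw [sum_pow_char p, Finset.sum_mul]
      refine Finset.sum_congr rfl fun i _ => ?_
      simp only [Equiv.apply_symm_apply]
      rw [mul_pow, ← pow_mul, ← pow_succ, mul_assoc]
    refine ⟨fun i => mu (E i).1 ^ p * lam (E i).2, fun x => ?_⟩
    obtain ⟨y, hy, hyu⟩ := hlam x
    choose z hz hzu using fun l => hmu (y l)
    refine ⟨fun i => z (E i).2 (E i).1, ?_, ?_⟩
    · simp only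
      rw [key (fun i => z (E i).2 (E i).1)]
      simp only [Equiv.apply_symm_apply]
      rw [hy]
      exact Finset.sum_congr rfl fun l _ => by rw [← hz l]
    · intro a ha
      simp only at ha
      rw [key] at ha
      have h1 := hyu _ ha
      funext i
      have h2 := hzu (E i).2 (fun i' => a (E.symm (i', (E i).2))) (congrFun h1 _).symm
      have h3 := congrFun h2 (E i).1
      simpa using h3

theorem aux_count (q D c : ℕ) (hq : 0 < q) :
    (Finset.univ.filter fun a : Fin q => (D + (q - 1) - a) / q = c).card
      = ((q : ℤ) - |(c : ℤ) * q - D|).toNat := by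
  have h : (Finset.univ.filter fun a : Fin q => (D + (q - 1) - a) / q = c).card
      = (Finset.Ico (D - c * q) (min q (D + q - c * q))).card := by
    refine Finset.card_bij (fun a _ => (a : ℕ)) ?_ ?_ ?_
    · intro a ha
      have := a.2
      simp only [Finset.mem_filter, Finset.mem_univ, true_and] at ha
      rw [Nat.div_eq_iff hq] at ha
      simp only [Finset.mem_Ico]
      generalize c * q = cq at *
      omega
    · intro a _ a' _ h
      exact Fin.ext h
    · intro a ha
      simp only [Finset.mem_Ico] at ha
      refine ⟨⟨a, by omega⟩, ?_, rfl⟩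
      simp only [Finset.mem_filter, Finset.mem_univ, true_and]
      rw [Nat.div_eq_iff hq]
      generalize c * q = cq at *
      omega
  rw [h, Nat.card_Ico]
  have : (c : ℤ) * q = ((c * q : ℕ) : ℤ) := by push_cast; rfl
  rw [this]
  generalize c * q = cq
  rcases abs_cases ((cq : ℤ) - D) with h | h <;> omega

theorem aux_equiv_s15 (B n q : ℕ) (hq : 0 < q) (d D : Fin n → ℕ)
    (hD : ∀ j, ∀ a : Fin q, (D j + (q - 1) - a) / q < d j + 1)
    (η : ((j : Fin n) → Fin (d j + 1)) → ℕ)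
    (hη : ∀ c, η c = B * ∏ j, ((q : ℤ) - |((c j : ℕ) : ℤ) * q - D j|).toNat) :
    ∃ E : (Σ c : (j : Fin n) → Fin (d j + 1), Fin (η c)) ≃ Fin B × (Fin n → Fin q),
      ∀ σ j, (D j + (q - 1) - ((E σ).2 j : ℕ)) / q = σ.1 j := by
  let cc : Fin B × (Fin n → Fin q) → ((j : Fin n) → Fin (d j + 1)) :=
    fun x j => ⟨_, hD j (x.2 j)⟩
  have hcard : ∀ c, Fintype.card {x // cc x = c} = η c := by
    intro c
    rw [hη, Fintype.card_subtype]
    have : (Finset.univ.filter fun x => cc x = c)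
        = (Finset.univ : Finset (Fin B)) ×ˢ Fintype.piFinset
          (fun j => Finset.univ.filter fun a : Fin q => (D j + (q - 1) - a) / q = c j) := by
      ext x
      simp [cc, funext_iff, Fin.ext_iff]
    rw [this, Finset.card_product, Fintype.card_piFinset, Finset.card_univ, Fintype.card_fin]
    congr 1
    exact Finset.prod_congr rfl fun j _ => aux_count q (D j) (c j) hq
  let E0 : ∀ c, Fin (η c) ≃ {x // cc x = c} := fun c => (Fintype.equivFinOfCardEq (hcard c)).symm
  refine ⟨(Equiv.sigmaCongrRight E0).trans (Equiv.sigmaFiberEquiv cc), ?_⟩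
  rintro ⟨c, t⟩ j
  have := (E0 c t).2
  exact congrArg Fin.val (congrFun this j)

/-- the exponent `q m + a` -/
noncomputable def expo {n : ℕ} (q : ℕ) (m : Fin n →₀ ℕ) (a : Fin n → Fin q) : Fin n →₀ ℕ :=
  q • m + Finsupp.equivFunOnFinite.symm (fun j => (a j : ℕ))

theorem expo_apply {n : ℕ} (q : ℕ) (m : Fin n →₀ ℕ) (a : Fin n → Fin q) (j : Fin n) :
    expo q m a j = q * m j + a j := by simp [expo]

theorem expo_inj {n q : ℕ} {m m' : Fin n →₀ ℕ} {a a' : Fin n → Fin q}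
    (h : expo q m a = expo q m' a') : m = m' ∧ a = a' := by
  have h' : ∀ j, q * m j + a j = q * m' j + a' j := fun j => by
    rw [← expo_apply, ← expo_apply, h]
  constructor
  · ext j
    have h1 := congrArg (· / q) (h' j)
    have hq : 0 < q := (a j).pos
    simpa [Nat.mul_add_div hq, Nat.div_eq_of_lt (a j).2, Nat.div_eq_of_lt (a' j).2] using h1
  · ext j
    have h1 := congrArg (· % q) (h' j)
    simpa [Nat.mul_add_mod, Nat.mod_eq_of_lt (a j).2, Nat.mod_eq_of_lt (a' j).2] using h1

theorem expo_surj {n q : ℕ} (hq : 0 < q) (M : Fin n →₀ ℕ) :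
    ∃ (m : Fin n →₀ ℕ) (a : Fin n → Fin q), M = expo q m a := by
  refine ⟨Finsupp.equivFunOnFinite.symm (fun j => M j / q),
    fun j => ⟨M j % q, Nat.mod_lt _ hq⟩, ?_⟩
  ext j
  simp [expo_apply, Nat.div_add_mod]

section
open MvPolynomial
variable {K : Type u} [Field K] {n : ℕ}

/-- the map `s ↦ ∑ φ(s) μ x^a` -/
noncomputable def GG (φS : MvPolynomial (Fin n) K →+* MvPolynomial (Fin n) K) (q : ℕ) {B : ℕ}
    (mu : Fin B → K) (s : Fin B × (Fin n → Fin q) → MvPolynomial (Fin n) K) :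
    MvPolynomial (Fin n) K :=
  ∑ x, φS (s x) * monomial (expo q 0 x.2) (mu x.1)

theorem coeff_term {p : ℕ} [Fact p.Prime] [CharP K p] (e : ℕ) (g : MvPolynomial (Fin n) K)
    (m : Fin n →₀ ℕ) (a a' : Fin n → Fin (p ^ e)) (c : K) :
    coeff (expo (p ^ e) m a) (g ^ p ^ e * monomial (expo (p ^ e) 0 a') c)
      = if a = a' then coeff m g ^ p ^ e * c else 0 := by
  have hpe : p ^ e ≠ 0 := pow_ne_zero _ (Fact.out : p.Prime).ne_zero
  induction g using MvPolynomial.induction_on' with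
  | monomial m' c' =>
    have h0 : p ^ e • m' + expo (p ^ e) 0 a' = expo (p ^ e) m' a' := by simp [expo]
    rw [monomial_pow, monomial_mul, h0, coeff_monomial, coeff_monomial]
    by_cases ha : a = a'
    · subst ha
      by_cases hm : m' = m
      · simp [hm]
      · have : ¬ expo (p ^ e) m' a = expo (p ^ e) m a := fun h => hm (expo_inj h).1
        simp [hm, this, zero_pow hpe]
    · have : ¬ expo (p ^ e) m' a' = expo (p ^ e) m a := fun h => ha (expo_inj h).2.symm
      simp [ha, this]
  | add f g hf hg =>
    rw [add_pow_char_pow, add_mul, coeff_add, hf, hg, coeff_add, add_pow_char_pow]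
    split_ifs <;> ring

theorem coeff_GG {p : ℕ} [Fact p.Prime] [CharP K p] (e : ℕ)
    (φS : MvPolynomial (Fin n) K →+* MvPolynomial (Fin n) K) (hφS : ∀ g, φS g = g ^ p ^ e)
    {B : ℕ} (mu : Fin B → K) (s : Fin B × (Fin n → Fin (p ^ e)) → MvPolynomial (Fin n) K)
    (m : Fin n →₀ ℕ) (a : Fin n → Fin (p ^ e)) :
    coeff (expo (p ^ e) m a) (GG φS (p ^ e) mu s)
      = ∑ i, coeff m (s (i, a)) ^ p ^ e * mu i := by
  rw [GG, coeff_sum, Fintype.sum_prod_type]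
  refine Finset.sum_congr rfl fun i _ => ?_
  simp only [hφS, coeff_term]
  simp

theorem GG_surj {p : ℕ} [Fact p.Prime] [CharP K p] (e : ℕ)
    (φS : MvPolynomial (Fin n) K →+* MvPolynomial (Fin n) K) (hφS : ∀ g, φS g = g ^ p ^ e)
    {B : ℕ} (mu : Fin B → K)
    (hmu : ∀ x : K, ∃! a : Fin B → K, x = ∑ i, a i ^ p ^ e * mu i)
    (g : MvPolynomial (Fin n) K) : ∃ s, GG φS (p ^ e) mu s = g := by
  have hq : 0 < p ^ e := pow_pos (Fact.out : p.Prime).pos _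
  induction g using MvPolynomial.induction_on' with
  | monomial M c =>
    obtain ⟨m, a, rfl⟩ := expo_surj hq M
    obtain ⟨y, hy, -⟩ := hmu c
    refine ⟨fun x => if x.2 = a then monomial m (y x.1) else 0, ?_⟩
    ext M'
    obtain ⟨m', a', rfl⟩ := expo_surj hq M'
    rw [coeff_GG e φS hφS, coeff_monomial]
    by_cases h : expo (p ^ e) m a = expo (p ^ e) m' a'
    · obtain ⟨rfl, rfl⟩ := expo_inj h
      simp [hy]
    · rw [if_neg h]
      refine Finset.sum_eq_zero fun i _ => ?_
      have h2 : coeff m' (if a' = a then monomial m (y i) else 0 : MvPolynomial (Fin n) K) = 0 := by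
        split_ifs with ha
        · subst ha
          rw [coeff_monomial, if_neg]
          rintro rfl
          exact h rfl
        · simp
      simp only [h2, zero_pow hq.ne', zero_mul]
  | add f g hf hg =>
    obtain ⟨s, rfl⟩ := hf
    obtain ⟨t, rfl⟩ := hg
    exact ⟨s + t, by simp [GG, add_mul, Finset.sum_add_distrib]⟩

theorem mem_span_mono (m : Fin n →₀ ℕ) (g : MvPolynomial (Fin n) K) :
    g ∈ Ideal.span {(monomial m 1 : MvPolynomial (Fin n) K)}
      ↔ ∀ M, coeff M g ≠ 0 → m ≤ M := by
  have := mem_ideal_span_monomial_image (R := K) (x := g) (s := {m})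
  simpa [mem_support_iff] using this

theorem prod_mono (c : Fin n → ℕ) :
    (∏ j, X j ^ c j : MvPolynomial (Fin n) K) = monomial (Finsupp.equivFunOnFinite.symm c) 1 := by
  rw [monomial_eq, Finsupp.prod_fintype _ _ (by simp)]
  simp

theorem GG_mem {p : ℕ} [Fact p.Prime] [CharP K p] (e : ℕ)
    (φS : MvPolynomial (Fin n) K →+* MvPolynomial (Fin n) K) (hφS : ∀ g, φS g = g ^ p ^ e)
    {B : ℕ} (mu : Fin B → K)
    (hmu : ∀ x : K, ∃! a : Fin B → K, x = ∑ i, a i ^ p ^ e * mu i) (D : Fin n → ℕ)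
    (s : Fin B × (Fin n → Fin (p ^ e)) → MvPolynomial (Fin n) K) :
    GG φS (p ^ e) mu s ∈ Ideal.span {(∏ j, X j ^ D j : MvPolynomial (Fin n) K)} ↔
      ∀ x, s x ∈ Ideal.span
        {(∏ j, X j ^ ((D j + (p ^ e - 1) - (x.2 j : ℕ)) / p ^ e) : MvPolynomial (Fin n) K)} := by
  have hq : 0 < p ^ e := pow_pos (Fact.out : p.Prime).pos _
  have hle : ∀ (m : Fin n →₀ ℕ) (a : Fin n → Fin (p ^ e)),
      Finsupp.equivFunOnFinite.symm D ≤ expo (p ^ e) m a ↔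
      Finsupp.equivFunOnFinite.symm (fun j => (D j + (p ^ e - 1) - (a j : ℕ)) / p ^ e) ≤ m := by
    intro m a
    simp only [Finsupp.le_def, expo_apply, Finsupp.equivFunOnFinite_symm_apply_apply]
    refine forall_congr' fun j => ?_
    have := (a j).2
    rw [← Nat.lt_succ_iff (n := m j), Nat.div_lt_iff_lt_mul hq, Nat.succ_mul, mul_comm (m j)]
    generalize p ^ e * m j = r
    omega
  have hz : ∀ m a, coeff (expo (p ^ e) m a) (GG φS (p ^ e) mu s) = 0 ↔
      ∀ i, coeff m (s (i, a)) = 0 := by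
    intro m a
    rw [coeff_GG e φS hφS]
    constructor
    · intro h i
      have := (hmu 0).unique (y₁ := fun i => coeff m (s (i, a))) (y₂ := 0) h.symm
        (by simp [zero_pow hq.ne'])
      exact congrFun this i
    · intro h
      simp [h, zero_pow hq.ne']
  simp only [prod_mono, mem_span_mono]
  constructor
  · rintro h ⟨i, a⟩ m hm
    rw [← hle]
    exact h _ fun h0 => hm ((hz m a).1 h0 i)
  · intro h M hM
    obtain ⟨m, a, rfl⟩ := expo_surj hq M
    rw [hle]
    rw [Ne, hz] at hM
    push Not at hM
    obtain ⟨i, hi⟩ := hM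
    exact h (i, a) m hi

/-- the linear map from the free module onto the pushforward -/
noncomputable def PsiMap (φS : MvPolynomial (Fin n) K →+* MvPolynomial (Fin n) K) (q : ℕ) {B : ℕ}
    (mu : Fin B → K) (I : Ideal (MvPolynomial (Fin n) K)) {T : Type*}
    (E : T ≃ Fin B × (Fin n → Fin q)) :
    (T → MvPolynomial (Fin n) K) →ₗ[MvPolynomial (Fin n) K]
      FStar φS (MvPolynomial (Fin n) K ⧸ I) where
  toFun s := (Ideal.Quotient.mk I (GG φS q mu (fun x => s (E.symm x))) :
    MvPolynomial (Fin n) K ⧸ I)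
  map_add' s t := by
    have : GG φS q mu (fun x => (s + t) (E.symm x))
        = GG φS q mu (fun x => s (E.symm x)) + GG φS q mu (fun x => t (E.symm x)) := by
      simp [GG, add_mul, Finset.sum_add_distrib]
    rw [this, map_add]
    rfl
  map_smul' r s := by
    have : GG φS q mu (fun x => (r • s) (E.symm x))
        = φS r * GG φS q mu (fun x => s (E.symm x)) := by
      simp [GG, Finset.mul_sum, mul_assoc]
    rw [this]
    rfl

end

theorem aux_final {R : Type*} [CommRing R] {C : Type*} [Fintype C] [DecidableEq C] (η : C → ℕ)
    (P : C → Ideal R) {N : Type*} [AddCommGroup N] [Module R N]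
    (Ψ : ((Σ c, Fin (η c)) → R) →ₗ[R] N) (hsurj : Function.Surjective Ψ)
    (hker : ∀ s, Ψ s = 0 ↔ ∀ σ, s σ ∈ P σ.1) :
    Nonempty (N ≃ₗ[R] ((c : C) → Fin (η c) → R ⧸ P c)) := by
  have hk : LinearMap.ker Ψ = Submodule.pi Set.univ (fun σ : (Σ c, Fin (η c)) => P σ.1) := by
    ext s
    rw [LinearMap.mem_ker, hker, Submodule.mem_pi]
    simp
  exact ⟨(Ψ.quotKerEquivOfSurjective hsurj).symm.trans
    ((Submodule.quotEquivOfEq _ _ hk).trans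
      ((Submodule.quotientPi (fun σ : (Σ c, Fin (η c)) => P σ.1)).trans
        (LinearEquiv.piCurry R (fun c _ => R ⧸ P c))))⟩

/-- **Lemma 6.1 (`L4.25`).** Let `K` be a field of characteristic `p` with
`b = [K : K^p]` finite (witnessed by a basis `lam` of `K` over `K^p`), and
`S = K[x_1, …, x_n]`.  Let `f = x_1^{d_1} ⋯ x_n^{d_n}` with `d_j ≥ 0`, let `e ≥ 1` with
`q = p^e > max d_j + 1` and let `1 ≤ k ≤ q - 1`.  Then, with
`Γ = {c : 0 ≤ c_j ≤ d_j}` and `η_k(c) = b^e ∏_j max(0, q - |c_j q - k d_j|)`,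
`F_*^e (S/f^k S) ≅ ⊕_{c ∈ Γ} (S/x^c S)^{⊕ η_k(c)}` as `S`-modules. -/
theorem stmt15 {K : Type u} [Field K] {p : ℕ} [Fact p.Prime] [CharP K p]
    (b : ℕ) (lam : Fin b → K)
    (hlam : ∀ x : K, ∃! a : Fin b → K, x = ∑ i, a i ^ p * lam i)
    (n : ℕ) (d : Fin n → ℕ)
    (e : ℕ) (he : 1 ≤ e) (hq : ∀ j, d j + 1 < p ^ e)
    (k : ℕ) (hk1 : 1 ≤ k) (hk2 : k ≤ p ^ e - 1)
    (φS : MvPolynomial (Fin n) K →+* MvPolynomial (Fin n) K)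
    (hφS : ∀ g, φS g = g ^ p ^ e) :
    Nonempty ((FStar φS (MvPolynomial (Fin n) K ⧸
        Ideal.span {(∏ j, MvPolynomial.X j ^ d j : MvPolynomial (Fin n) K) ^ k}))
      ≃ₗ[MvPolynomial (Fin n) K]
      ((c : (j : Fin n) → Fin (d j + 1)) →
        Fin (b ^ e * ∏ j, ((p ^ e : ℤ) - |(c j : ℤ) * p ^ e - k * d j|).toNat) →
          MvPolynomial (Fin n) K ⧸
            Ideal.span {(∏ j, MvPolynomial.X j ^ ((c j : ℕ)) :
              MvPolynomial (Fin n) K)})) := by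
  classical
  have hq0 : 0 < p ^ e := pow_pos (Fact.out : p.Prime).pos _
  obtain ⟨mu, hmu⟩ := aux_basis b lam hlam e
  obtain ⟨E, hE⟩ := aux_equiv_s15 (b ^ e) n (p ^ e) hq0 d (fun j => k * d j) (by
      intro j a
      rw [Nat.div_lt_iff_lt_mul hq0]
      have h1 : k * d j ≤ p ^ e * d j := Nat.mul_le_mul_right _ (by omega)
      have h2 : (d j + 1) * p ^ e = p ^ e * d j + p ^ e := by ring
      omega)
    (fun c => b ^ e * ∏ j, ((p ^ e : ℤ) - |(c j : ℤ) * p ^ e - k * d j|).toNat)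
    (by intro c; push_cast; rfl)
  have hf : (∏ j, MvPolynomial.X j ^ d j : MvPolynomial (Fin n) K) ^ k
      = ∏ j, MvPolynomial.X j ^ (k * d j) := by
    rw [← Finset.prod_pow]
    exact Finset.prod_congr rfl fun j _ => by rw [← pow_mul, mul_comm]
  rw [hf]
  set I := Ideal.span {(∏ j, MvPolynomial.X j ^ (k * d j) : MvPolynomial (Fin n) K)} with hI
  let Ψ := PsiMap φS (p ^ e) mu I E
  have hsurj : Function.Surjective Ψ := by
    intro y
    obtain ⟨g, rfl⟩ := Ideal.Quotient.mk_surjective (I := I) y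
    obtain ⟨s, rfl⟩ := GG_surj e φS hφS mu hmu g
    refine ⟨fun t => s (E t), ?_⟩
    change Ideal.Quotient.mk I (GG φS (p ^ e) mu (fun x => s (E (E.symm x)))) = _
    simp
  refine aux_final _ (fun c : (j : Fin n) → Fin (d j + 1) =>
    Ideal.span {(∏ j, MvPolynomial.X j ^ ((c j : ℕ)) : MvPolynomial (Fin n) K)}) Ψ hsurj ?_
  intro s
  have h1 : Ψ s = 0 ↔ GG φS (p ^ e) mu (fun x => s (E.symm x)) ∈ I :=
    Ideal.Quotient.eq_zero_iff_mem
  rw [h1, hI, GG_mem e φS hφS mu hmu, ← E.forall_congr_right]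
  simp only [Equiv.symm_apply_apply, hE]
end
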